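/- Let p = (p_i)_{i∈ℕ} and q = (q_i)_{i∈ℕ} be probability vectors on the countable alphabet ℕ with all entries strictly positive, such that both have infinite entropy: −∑_i p_i log p_i = ∞ and −∑_i q_i log q_i = ∞. Then the Bernoulli schemes BS(p) and BS(q) on ℕ^ℤ are finitarily isomorphic. -/

import Mathlib

open MeasureTheory ENNReal Filter

noncomputable section

/-- The left shift transformation on bi-infinite sequences: `(shift x) n = x (n+1)`. -/
def shift {A : Type*} : (ℤ → A) → (ℤ → A) := fun x n => x (n + 1)

/-- `φ` is a homomorphism (factor map) from the shift system `(ℤ → A, μ, shift)` to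
`(ℤ → B, ν, shift)`, defined on the shift-invariant full-measure domain `D`. -/
structure IsFactorMap {A B : Type*} [MeasurableSpace A] [MeasurableSpace B]
    (μ : Measure (ℤ → A)) (ν : Measure (ℤ → B))
    (D : Set (ℤ → A)) (φ : (ℤ → A) → (ℤ → B)) : Prop where
  measurable_map : Measurable φ
  dom_measurable : MeasurableSet D
  dom_shift_invariant : shift ⁻¹' D = D
  dom_full : μ D = 1
  pushforward : ν = μ.map φ
  equivariant : ∀ x ∈ D, φ (shift x) = shift (φ x)

/-- The window `[-q, r]` of `x` determines the zero coordinate of the image under `φ`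
(among points of the domain `D`). -/
def DeterminesAt {A B : Type*} (D : Set (ℤ → A)) (φ : (ℤ → A) → (ℤ → B))
    (q r : ℕ) (x : ℤ → A) : Prop :=
  ∀ y ∈ D, (∀ i : ℤ, -(q : ℤ) ≤ i → i ≤ (r : ℤ) → y i = x i) → φ y 0 = φ x 0

/-- A homomorphism `φ` with domain `D` is finitary if for almost every `x` in the domain
there are nonnegative integers `q`, `r` such that the coordinates `x_{-q}, …, x_r`
determine `(φ x)_0`. -/
def IsFinitary {A B : Type*} [MeasurableSpace A] [MeasurableSpace B]
    (μ : Measure (ℤ → A)) (D : Set (ℤ → A)) (φ : (ℤ → A) → (ℤ → B)) : Prop :=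
  ∀ᵐ x ∂μ, x ∈ D → ∃ q r : ℕ, DeterminesAt D φ q r x

/-- The code length `C(x) = q(x) + r(x)` with `q(x), r(x)` minimal such that the window
`[-q(x), r(x)]` determines the zero output coordinate (`⊤` if no finite window works). -/
def codeLength {A B : Type*} (D : Set (ℤ → A)) (φ : (ℤ → A) → (ℤ → B))
    (x : ℤ → A) : ℝ≥0∞ :=
  ⨅ (q : ℕ) (r : ℕ) (_ : DeterminesAt D φ q r x), ((q : ℝ≥0∞) + (r : ℝ≥0∞))

/-- `μ` is the Bernoulli (product) measure on `(ℤ → A)` given by the probability vector `p`. -/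
def IsBernoulliMeasure {A : Type*} [MeasurableSpace A] (μ : Measure (ℤ → A)) (p : A → ℝ) : Prop :=
  ∀ (F : Finset ℤ) (s : ℤ → A),
    μ {x | ∀ i ∈ F, x i = s i} = ENNReal.ofReal (∏ i ∈ F, p (s i))

/-- A strictly positive probability vector on a finite alphabet. -/
def IsProbVector {A : Type*} [Fintype A] (p : A → ℝ) : Prop :=
  (∀ i, 0 < p i) ∧ ∑ i, p i = 1

/-- The entropy `H(p) = -∑ p_i log p_i` of a probability vector. -/
def vecEntropy {A : Type*} [Fintype A] (p : A → ℝ) : ℝ := -∑ i, p i * Real.log (p i)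

/-- A finitary isomorphism: a pair of mutually inverse finitary factor maps. -/
def IsFinitaryIsomorphism {A B : Type*} [MeasurableSpace A] [MeasurableSpace B]
    (μ : Measure (ℤ → A)) (ν : Measure (ℤ → B))
    (D : Set (ℤ → A)) (E : Set (ℤ → B))
    (φ : (ℤ → A) → (ℤ → B)) (ψ : (ℤ → B) → (ℤ → A)) : Prop :=
  IsFactorMap μ ν D φ ∧ IsFactorMap ν μ E ψ ∧
  IsFinitary μ D φ ∧ IsFinitary ν E ψ ∧
  (∀ x ∈ D, φ x ∈ E ∧ ψ (φ x) = x) ∧ (∀ y ∈ E, ψ y ∈ D ∧ φ (ψ y) = y)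

/-!
The i.i.d. sequence with uniform letters in `[0, 1)` codes every Bernoulli scheme of infinite
entropy, through an equivariant map which is a homeomorphism onto its image on an invariant set of
full measure. Composing one such coding with the inverse of another gives maps that are continuous
on sets of full measure, and continuity into a discrete alphabet is finitariness.

The coding reveals a letter `b` through its truncations `min b n`, for larger and larger `n`. At
each stage the runs of zeros among the letters already known cut `ℤ` into blocks. The unit cube over
a block is tiled by boxes indexed by the words that refine the known word, their volumes being the
conditional probabilities; the box that contains the current point yields the refined letters, and
the point is rescaled inside its box, so that it is again uniform and independent of the letters.
Because the entropy is infinite, a stage can gain so much information per letter that words of large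
conditional probability are rare, and then the box can be made to have all sides at most `3 / 4`
with probability close to one. Every coordinate of the point is thus contracted infinitely often,
and is determined by the letters.
-/

/-! ### Box partitions of the unit cube -/

/-- The boxes `∏ i, [lower z i, lower z i + side z i)`, `z ∈ Z`, tile the unit cube and their
volumes are proportional to the weights `w z`. -/
structure IsBoxPartition {ι : Type*} {n : ℕ} (Z : Finset ι) (w : ι → ℝ)
    (lower side : ι → Fin n → ℝ) : Prop where
  lower_nonneg : ∀ z ∈ Z, ∀ i, 0 ≤ lower z i
  side_pos : ∀ z ∈ Z, ∀ i, 0 < side z i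
  lower_add_side_le : ∀ z ∈ Z, ∀ i, lower z i + side z i ≤ 1
  prod_side_mul : ∀ z ∈ Z, (∏ i, side z i) * ∑ y ∈ Z, w y = w z
  existsUnique_box : ∀ u : Fin n → ℝ, (∀ i, u i ∈ Set.Ico (0 : ℝ) 1) →
    ∃! z, z ∈ Z ∧ ∀ i, u i ∈ Set.Ico (lower z i) (lower z i + side z i)

section BoxPartition

variable {ι κ : Type*} {n : ℕ} {Z : Finset ι} {w : ι → ℝ}

lemma exists_interval_partition (hw : ∀ z ∈ Z, 0 ≤ w z) :
    ∃ lower : ι → ℝ, (∀ z ∈ Z, 0 ≤ lower z ∧ lower z + w z ≤ ∑ y ∈ Z, w y) ∧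
      ∀ u ∈ Set.Ico 0 (∑ y ∈ Z, w y), ∃! z, z ∈ Z ∧ u ∈ Set.Ico (lower z) (lower z + w z) := by
  classical
  induction Z using Finset.induction_on with
  | empty => exact ⟨0, by simp, by simp⟩
  | insert a Z ha ih =>
    obtain ⟨lower, bounds, tiles⟩ := ih fun z hz => hw z (Finset.mem_insert_of_mem hz)
    have sum_nonneg : 0 ≤ ∑ y ∈ Z, w y :=
      Finset.sum_nonneg fun z hz => hw z (Finset.mem_insert_of_mem hz)
    have update_of_mem : ∀ z ∈ Z, Function.update lower a (∑ y ∈ Z, w y) z = lower z :=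
      fun z hz => Function.update_of_ne (ne_of_mem_of_not_mem hz ha) _ _
    refine ⟨Function.update lower a (∑ y ∈ Z, w y), fun z hz => ?_, fun u hu => ?_⟩
    · rw [Finset.sum_insert ha]
      rcases Finset.mem_insert.1 hz with rfl | hz
      · rw [Function.update_self]
        exact ⟨sum_nonneg, (add_comm _ _).le⟩
      · rw [update_of_mem z hz]
        exact ⟨(bounds z hz).1, by linarith [bounds z hz, hw a (Finset.mem_insert_self a Z)]⟩
    · rw [Finset.sum_insert ha] at hu
      by_cases hlt : u < ∑ y ∈ Z, w y
      · obtain ⟨z, ⟨hz, hzu⟩, unique⟩ := tiles u ⟨hu.1, hlt⟩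
        refine ⟨z, ⟨Finset.mem_insert_of_mem hz, by rwa [update_of_mem z hz]⟩, ?_⟩
        rintro y ⟨hy, hyu⟩
        rcases Finset.mem_insert.1 hy with rfl | hy
        · rw [Function.update_self] at hyu
          exact absurd hyu.1 hlt.not_ge
        · exact unique y ⟨hy, by rwa [update_of_mem y hy] at hyu⟩
      · refine ⟨a, ⟨Finset.mem_insert_self a Z, ?_⟩, ?_⟩
        · rw [Function.update_self]
          exact ⟨not_lt.1 hlt, by linarith [hu.2]⟩
        · rintro y ⟨hy, hyu⟩
          refine (Finset.mem_insert.1 hy).resolve_right fun hy => hlt ?_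
          rw [update_of_mem y hy] at hyu
          exact hyu.2.trans_le (bounds y hy).2

lemma IsBoxPartition.singleton (z : ι) (w : ι → ℝ) :
    IsBoxPartition {z} w (fun _ _ => 0 : ι → Fin n → ℝ) fun _ _ => 1 where
  lower_nonneg := by simp
  side_pos := by simp
  lower_add_side_le := by simp
  prod_side_mul := by simp
  existsUnique_box u hu := ⟨z, by simpa using hu, fun y hy => by simpa using hy.1⟩

/-- Cut the cube orthogonally to the first axis into slabs, one for each fibre of `g`, and
partition every slab along the remaining axes. -/
lemma IsBoxPartition.exists_cons [DecidableEq κ] (hw : ∀ z ∈ Z, 0 < w z)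
    (hZ : Z.Nonempty) (g : ι → κ) {lower side : κ → ι → Fin n → ℝ}
    (hg : ∀ k ∈ Z.image g, IsBoxPartition {z ∈ Z | g z = k} w (lower k) (side k)) :
    ∃ first : κ → ℝ, IsBoxPartition Z w (fun z => Fin.cons (first (g z)) (lower (g z) z))
      fun z => Fin.cons ((∑ y ∈ Z with g y = g z, w y) / ∑ y ∈ Z, w y) (side (g z) z) := by
  have total_pos : 0 < ∑ y ∈ Z, w y := Finset.sum_pos hw hZ
  have mem_fiber : ∀ z ∈ Z, z ∈ {y ∈ Z | g y = g z} := fun z hz => by simpa using hz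
  have fiber_pos : ∀ z ∈ Z, 0 < ∑ y ∈ Z with g y = g z, w y := fun z hz =>
    Finset.sum_pos (fun y hy => hw y (Finset.mem_filter.1 hy).1) ⟨z, mem_fiber z hz⟩
  have hg' : ∀ z ∈ Z, IsBoxPartition {y ∈ Z | g y = g z} w (lower (g z)) (side (g z)) :=
    fun z hz => hg _ (Finset.mem_image_of_mem g hz)
  have sum_slabs : ∑ k ∈ Z.image g, (∑ y ∈ Z with g y = k, w y) / ∑ y ∈ Z, w y = 1 := by
    rw [← Finset.sum_div, Finset.sum_fiberwise_of_maps_to fun z => Finset.mem_image_of_mem g,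
      div_self total_pos.ne']
  obtain ⟨first, bounds, tiles⟩ := exists_interval_partition (Z := Z.image g)
    (w := fun k => (∑ y ∈ Z with g y = k, w y) / ∑ y ∈ Z, w y)
    (Finset.forall_mem_image.2 fun z hz => (div_pos (fiber_pos z hz) total_pos).le)
  rw [sum_slabs] at bounds tiles
  rw [Finset.forall_mem_image] at bounds
  refine ⟨first, ⟨fun z hz => Fin.cases (bounds hz).1 ((hg' z hz).lower_nonneg z (mem_fiber z hz)),
    fun z hz => Fin.cases (div_pos (fiber_pos z hz) total_pos)
      ((hg' z hz).side_pos z (mem_fiber z hz)),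
    fun z hz => Fin.cases (bounds hz).2 ((hg' z hz).lower_add_side_le z (mem_fiber z hz)),
    fun z hz => ?_, fun u hu => ?_⟩⟩
  · rw [Fin.prod_cons, mul_right_comm, div_mul_cancel₀ _ total_pos.ne', mul_comm]
    exact (hg' z hz).prod_side_mul z (mem_fiber z hz)
  · obtain ⟨k, ⟨hk, hku⟩, unique_slab⟩ := tiles (u 0) (hu 0)
    obtain ⟨z, ⟨hz, hzu⟩, unique_box⟩ :=
      (hg k hk).existsUnique_box (Fin.tail u) fun i => hu i.succ
    obtain ⟨hzZ, rfl⟩ := Finset.mem_filter.1 hz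
    refine ⟨z, ⟨hzZ, Fin.cases hku hzu⟩, fun y ⟨hy, hyu⟩ => ?_⟩
    have same_slab : g y = g z := unique_slab _ ⟨Finset.mem_image_of_mem g hy, hyu 0⟩
    refine unique_box y ⟨Finset.mem_filter.2 ⟨hy, same_slab⟩, fun i => ?_⟩
    simpa [same_slab, Fin.tail] using hyu i.succ

lemma exists_isBoxPartition_side_zero (n : ℕ) (hw : ∀ z ∈ Z, 0 < w z)
    (hZ : Z.Nonempty) :
    ∃ lower side : ι → Fin (n + 1) → ℝ, IsBoxPartition Z w lower side ∧
      ∀ z ∈ Z, side z 0 = w z / ∑ y ∈ Z, w y := by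
  classical
  have filter_eq : ∀ z ∈ Z, {y ∈ Z | y = z} = {z} := fun z hz => by
    ext y
    rw [Finset.mem_filter, Finset.mem_singleton]
    exact ⟨And.right, fun h => ⟨h ▸ hz, h⟩⟩
  obtain ⟨first, isPartition⟩ := IsBoxPartition.exists_cons hw hZ id
    (lower := fun _ _ (_ : Fin n) => 0) (side := fun _ _ _ => 1) fun z hz => by
      simp only [id, filter_eq z (by simpa using hz)]
      exact .singleton z w
  refine ⟨_, _, isPartition, fun z hz => ?_⟩
  simp only [id, filter_eq z hz, Finset.sum_singleton, Fin.cons_zero]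

lemma exists_balanced_subset (hw : ∀ z ∈ Z, 0 < w z)
    (hhalf : ∀ z ∈ Z, w z ≤ (∑ y ∈ Z, w y) / 2) :
    ∃ Y ⊆ Z, (∑ y ∈ Z, w y) / 4 ≤ ∑ y ∈ Y, w y ∧ ∑ y ∈ Y, w y ≤ 3 / 4 * ∑ y ∈ Z, w y := by
  classical
  have total_nonneg : 0 ≤ ∑ y ∈ Z, w y := Finset.sum_nonneg fun z hz => (hw z hz).le
  obtain ⟨Y, hY, maximal⟩ := Finset.exists_max_image
    {Y ∈ Z.powerset | ∑ y ∈ Y, w y ≤ 3 / 4 * ∑ y ∈ Z, w y} (fun Y => ∑ y ∈ Y, w y)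
    ⟨∅, by simpa using total_nonneg⟩
  simp only [Finset.mem_filter, Finset.mem_powerset] at hY maximal
  refine ⟨Y, hY.1, ?_, hY.2⟩
  by_contra! hlt
  obtain ⟨z, hz, hzY⟩ : ∃ z ∈ Z, z ∉ Y := by
    by_contra! hsub
    rw [hY.1.antisymm hsub] at hlt
    linarith
  have insert_le := maximal (insert z Y) ⟨Finset.insert_subset hz hY.1, by
    rw [Finset.sum_insert hzY]; linarith [hhalf z hz]⟩
  rw [Finset.sum_insert hzY] at insert_le
  linarith [hw z hz]

/-- The mass of the boxes having a side longer than `3 / 4`. -/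
def longMass (Z : Finset ι) (w : ι → ℝ) (side : ι → Fin n → ℝ) : ℝ :=
  open Classical in ∑ z ∈ Z with ∃ i, 3 / 4 < side z i, w z

/-- The mass of the atoms heavier than `4⁻ⁿ` times half of the total mass. -/
def heavyMass (Z : Finset ι) (w : ι → ℝ) (n : ℕ) : ℝ :=
  ∑ z ∈ Z with (∑ y ∈ Z, w y) / 2 / 4 ^ n < w z, w z

lemma heavyMass_nonneg (hw : ∀ z ∈ Z, 0 < w z) (n : ℕ) : 0 ≤ heavyMass Z w n :=
  Finset.sum_nonneg fun z hz => (hw z (Finset.mem_filter.1 hz).1).le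

lemma longMass_le_two_mul_heavyMass_of_half_lt (hw : ∀ z ∈ Z, 0 < w z) {a : ι} (ha : a ∈ Z)
    (half_lt : (∑ y ∈ Z, w y) / 2 < w a) (side : ι → Fin n → ℝ) :
    longMass Z w side ≤ 2 * heavyMass Z w n := by
  have total_pos : 0 < ∑ y ∈ Z, w y := Finset.sum_pos hw ⟨a, ha⟩
  have long_le : longMass Z w side ≤ ∑ y ∈ Z, w y :=
    Finset.sum_le_sum_of_subset_of_nonneg (Finset.filter_subset _ _) fun z hz _ => (hw z hz).le
  have a_heavy : (∑ y ∈ Z, w y) / 2 / 4 ^ n < w a :=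
    (div_le_self (by positivity) (one_le_pow₀ (by norm_num))).trans_lt half_lt
  have le_heavy : w a ≤ heavyMass Z w n :=
    Finset.single_le_sum (fun z hz => (hw z (Finset.mem_filter.1 hz).1).le)
      (Finset.mem_filter.2 ⟨ha, a_heavy⟩)
  linarith

lemma longMass_eq_zero {side : ι → Fin n → ℝ} (h : ∀ z ∈ Z, ∀ i, side z i ≤ 3 / 4) :
    longMass Z w side = 0 :=
  Finset.sum_eq_zero fun z hz => by
    obtain ⟨hz, i, hi⟩ := Finset.mem_filter.1 hz
    exact absurd (h z hz i) hi.not_ge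

lemma longMass_cons [DecidableEq κ] (g : ι → κ) {first : ι → ℝ}
    (hfirst : ∀ z ∈ Z, first z ≤ 3 / 4) (side : κ → ι → Fin n → ℝ) :
    longMass Z w (fun z => Fin.cons (first z) (side (g z) z) : ι → Fin (n + 1) → ℝ) =
      ∑ k ∈ Z.image g, longMass {z ∈ Z | g z = k} w (side k) := by
  unfold longMass
  rw [← Finset.sum_fiberwise_of_maps_to (g := g) (t := Z.image g)
    fun z hz => Finset.mem_image_of_mem g (Finset.mem_filter.1 hz).1]
  refine Finset.sum_congr rfl fun k _ => Finset.sum_congr ?_ fun _ _ => rfl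
  ext z
  simp only [Finset.mem_filter, Fin.exists_fin_succ, Fin.cons_zero, Fin.cons_succ]
  constructor
  · rintro ⟨⟨hz, long | long⟩, rfl⟩
    · exact absurd (hfirst z hz) long.not_ge
    · exact ⟨⟨hz, rfl⟩, long⟩
  · rintro ⟨⟨hz, rfl⟩, long⟩
    exact ⟨⟨hz, .inr long⟩, rfl⟩

lemma sum_heavyMass_fiber_le [DecidableEq κ] (hw : ∀ z ∈ Z, 0 < w z) (g : ι → κ)
    (hg : ∀ k ∈ Z.image g, (∑ y ∈ Z, w y) / 4 ≤ ∑ y ∈ Z with g y = k, w y) (n : ℕ) :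
    ∑ k ∈ Z.image g, heavyMass {z ∈ Z | g z = k} w n ≤ heavyMass Z w (n + 1) := by
  unfold heavyMass
  rw [← Finset.sum_fiberwise_of_maps_to (g := g) (t := Z.image g) (s := Z.filter _)
    fun z hz => Finset.mem_image_of_mem g (Finset.mem_filter.1 hz).1]
  refine Finset.sum_le_sum fun k hk => Finset.sum_le_sum_of_subset_of_nonneg (fun z hz => ?_)
    fun z hz _ => (hw z (Finset.mem_filter.1 (Finset.mem_filter.1 hz).1).1).le
  simp only [Finset.mem_filter] at hz ⊢
  refine ⟨⟨hz.1.1, lt_of_le_of_lt ?_ hz.2⟩, hz.1.2⟩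
  calc (∑ y ∈ Z, w y) / 2 / 4 ^ (n + 1) = (∑ y ∈ Z, w y) / 4 / 2 / 4 ^ n := by ring
    _ ≤ (∑ y ∈ Z with g y = k, w y) / 2 / 4 ^ n := by gcongr; exact hg k hk

lemma exists_balanced_coloring (hw : ∀ z ∈ Z, 0 < w z)
    (hhalf : ∀ z ∈ Z, w z ≤ (∑ y ∈ Z, w y) / 2) :
    ∃ g : ι → Bool, ∀ k, (∑ y ∈ Z, w y) / 4 ≤ ∑ y ∈ Z with g y = k, w y ∧
      ∑ y ∈ Z with g y = k, w y ≤ 3 / 4 * ∑ y ∈ Z, w y := by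
  classical
  obtain ⟨Y, hY, quarter_le, le_three_quarters⟩ := exists_balanced_subset hw hhalf
  have split : ∑ y ∈ Z \ Y, w y + ∑ y ∈ Y, w y = ∑ y ∈ Z, w y := Finset.sum_sdiff hY
  refine ⟨fun y => decide (y ∈ Y), Bool.forall_bool.2 ⟨?_, ?_⟩⟩
  · simp only [decide_eq_false_iff_not, ← Finset.sdiff_eq_filter]
    constructor <;> linarith
  · simp only [decide_eq_true_eq, Finset.filter_mem_eq_inter, Finset.inter_eq_right.2 hY]
    exact ⟨quarter_le, le_three_quarters⟩

/-- If no atom carries more than half of the mass, the first axis is split into two comparable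
parts, which makes the first sides short; otherwise the bound is trivial. -/
lemma exists_isBoxPartition_longMass_le (n : ℕ) (hw : ∀ z ∈ Z, 0 < w z) (hZ : Z.Nonempty) :
    ∃ lower side : ι → Fin (n + 1) → ℝ, IsBoxPartition Z w lower side ∧
      longMass Z w side ≤ 2 * heavyMass Z w (n + 1) := by
  classical
  have total_pos : 0 < ∑ y ∈ Z, w y := Finset.sum_pos hw hZ
  induction n generalizing Z with
  | zero =>
    obtain ⟨lower, side, isPartition, side_zero⟩ := exists_isBoxPartition_side_zero 0 hw hZ
    refine ⟨lower, side, isPartition, ?_⟩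
    by_cases hbig : ∃ a ∈ Z, (∑ y ∈ Z, w y) / 2 < w a
    · obtain ⟨a, ha, half_lt⟩ := hbig
      exact longMass_le_two_mul_heavyMass_of_half_lt hw ha half_lt side
    · push Not at hbig
      refine (longMass_eq_zero fun z hz i => ?_).trans_le
        (mul_nonneg zero_le_two (heavyMass_nonneg hw _))
      rw [Fin.fin_one_eq_zero i, side_zero z hz, div_le_iff₀ total_pos]
      linarith [hbig z hz]
  | succ n ih =>
    by_cases hbig : ∃ a ∈ Z, (∑ y ∈ Z, w y) / 2 < w a
    · obtain ⟨a, ha, half_lt⟩ := hbig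
      obtain ⟨lower, side, isPartition, -⟩ := exists_isBoxPartition_side_zero (n + 1) hw hZ
      exact ⟨lower, side, isPartition, longMass_le_two_mul_heavyMass_of_half_lt hw ha half_lt side⟩
    push Not at hbig
    obtain ⟨g, balanced⟩ := exists_balanced_coloring hw hbig
    have hw' : ∀ k, ∀ z ∈ {y ∈ Z | g y = k}, 0 < w z := fun k z hz =>
      hw z (Finset.mem_filter.1 hz).1
    have fiber_pos : ∀ k, 0 < ∑ y ∈ Z with g y = k, w y := fun k =>
      (by positivity : 0 < (∑ y ∈ Z, w y) / 4).trans_le (balanced k).1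
    choose lower side isPartition long_le using fun k =>
      ih (hw' k) (Finset.nonempty_of_sum_ne_zero (fiber_pos k).ne') (fiber_pos k)
    obtain ⟨first, glued⟩ := IsBoxPartition.exists_cons hw hZ g fun k _ => isPartition k
    refine ⟨_, _, glued, ?_⟩
    rw [longMass_cons g fun z _ => (div_le_iff₀ total_pos).2 (balanced (g z)).2]
    calc ∑ k ∈ Z.image g, longMass {y ∈ Z | g y = k} w (side k)
        ≤ 2 * ∑ k ∈ Z.image g, heavyMass {y ∈ Z | g y = k} w (n + 1) := by
          rw [Finset.mul_sum]
          exact Finset.sum_le_sum fun k _ => long_le k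
      _ ≤ 2 * heavyMass Z w (n + 1 + 1) := by
          gcongr
          exact sum_heavyMass_fiber_le hw g (fun k _ => (balanced k).1) (n + 1)

end BoxPartition

/-! ### Cuts, blocks and windows -/

section Blocks

variable {A β : Type*} [Zero A] {m : ℕ} {ξ ξ' : ℤ → A} {c c₀ c₁ t : ℤ} {d : ℕ}

/-- A cut is a site at which a run of `m` zeros starts. -/
def IsCut (m : ℕ) (ξ : ℤ → A) (c : ℤ) : Prop := ∀ i : ℕ, i < m → ξ (c + i) = 0

/-- The sites `c, …, c + d` form a maximal interval without cuts except at `c`. -/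
structure IsBlock (m : ℕ) (ξ : ℤ → A) (c : ℤ) (d : ℕ) : Prop where
  left : IsCut m ξ c
  right : IsCut m ξ (c + d + 1)
  between : ∀ i : ℕ, 0 < i → i ≤ d → ¬ IsCut m ξ (c + i)

/-- Every site lies in a block: there are cuts arbitrarily far in both directions. -/
def CutsUnbounded (m : ℕ) (ξ : ℤ → A) : Prop :=
  ∀ t : ℤ, (∃ c ≤ t, IsCut m ξ c) ∧ ∃ c > t, IsCut m ξ c

/-- The distance from `t` to the last cut at or before `t` (`0` if there is none). -/
def back (m : ℕ) (ξ : ℤ → A) (t : ℤ) : ℕ := sInf {a : ℕ | IsCut m ξ (t - a)}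

/-- The number of sites strictly between `t` and the first cut after `t` (`0` if there is none). -/
def ahead (m : ℕ) (ξ : ℤ → A) (t : ℤ) : ℕ := sInf {b : ℕ | IsCut m ξ (t + 1 + b)}

/-- The restriction of a sequence to the sites `c, …, c + d`. -/
def window (x : ℤ → β) (c : ℤ) (d : ℕ) : Fin (d + 1) → β := fun i => x (c + (i : ℕ))

/-- The sequence whose restriction to each block `c, …, c + d` of `ξ` is the word `H c d`. -/
def blockwise (m : ℕ) (ξ : ℤ → A) (H : ℤ → (d : ℕ) → Fin (d + 1) → β) (t : ℤ) : β :=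
  H (t - back m ξ t) (back m ξ t + ahead m ξ t) ⟨back m ξ t, by omega⟩

lemma blockwise_eq (H : ℤ → (d : ℕ) → Fin (d + 1) → β) {a b : ℕ} (ha : back m ξ t = a)
    (hb : ahead m ξ t = b) : blockwise m ξ H t = H (t - a) (a + b) ⟨a, by omega⟩ := by
  subst ha hb
  rfl

lemma isCut_shift : IsCut m (shift ξ) c ↔ IsCut m ξ (c + 1) := by
  simp only [IsCut, shift, add_right_comm]

lemma back_shift : back m (shift ξ) t = back m ξ (t + 1) := by
  simp only [back, isCut_shift, sub_add_eq_add_sub]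

lemma ahead_shift : ahead m (shift ξ) t = ahead m ξ (t + 1) := by
  simp only [ahead, isCut_shift, add_right_comm _ _ (1 : ℤ)]

lemma window_shift (x : ℤ → β) : window (shift x) c d = window x (c + 1) d := by
  funext i
  simp only [window, shift, add_right_comm]

lemma blockwise_shift (H : ℤ → (d : ℕ) → Fin (d + 1) → β) :
    blockwise m (shift ξ) (fun c => H (c + 1)) = shift (blockwise m ξ H) := by
  funext t
  rw [shift, blockwise_eq H back_shift.symm ahead_shift.symm]
  simp only [blockwise, sub_add_eq_add_sub]

lemma cutsUnbounded_shift : CutsUnbounded m (shift ξ) ↔ CutsUnbounded m ξ := by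
  simp only [CutsUnbounded, isCut_shift]
  constructor
  · intro h t
    obtain ⟨⟨a, ha, hcut⟩, b, hb, hcut'⟩ := h (t - 1)
    exact ⟨⟨a + 1, by omega, hcut⟩, b + 1, by omega, hcut'⟩
  · intro h t
    obtain ⟨⟨a, ha, hcut⟩, b, hb, hcut'⟩ := h (t + 1)
    exact ⟨⟨a - 1, by omega, by rwa [sub_add_cancel]⟩, b - 1, by omega, by rwa [sub_add_cancel]⟩

lemma IsCut.back_le (h : IsCut m ξ c) (hc : c ≤ t) : back m ξ t ≤ (t - c).toNat :=
  Nat.sInf_le (by rwa [Set.mem_ofPred_eq, Int.toNat_of_nonneg (by omega), _root_.sub_sub_cancel])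

lemma IsCut.ahead_le (h : IsCut m ξ c) (hc : t < c) : ahead m ξ t ≤ (c - (t + 1)).toNat :=
  Nat.sInf_le (by rwa [Set.mem_ofPred_eq, Int.toNat_sub_of_le (by omega), add_sub_cancel])

lemma CutsUnbounded.isCut_sub_back (h : CutsUnbounded m ξ) (t : ℤ) :
    IsCut m ξ (t - back m ξ t) := by
  obtain ⟨c, hc, hcut⟩ := (h t).1
  exact Nat.sInf_mem (s := {a : ℕ | IsCut m ξ (t - a)}) ⟨(t - c).toNat, by
    rwa [Set.mem_ofPred_eq, Int.toNat_of_nonneg (by omega), _root_.sub_sub_cancel]⟩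

lemma CutsUnbounded.isCut_add_ahead (h : CutsUnbounded m ξ) (t : ℤ) :
    IsCut m ξ (t + 1 + ahead m ξ t) := by
  obtain ⟨c, hc, hcut⟩ := (h t).2
  exact Nat.sInf_mem (s := {b : ℕ | IsCut m ξ (t + 1 + b)}) ⟨(c - (t + 1)).toNat, by
    rwa [Set.mem_ofPred_eq, Int.toNat_sub_of_le (by omega), add_sub_cancel]⟩

lemma CutsUnbounded.isBlock (h : CutsUnbounded m ξ) (t : ℤ) :
    IsBlock m ξ (t - back m ξ t) (back m ξ t + ahead m ξ t) where
  left := h.isCut_sub_back t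
  right := by
    convert h.isCut_add_ahead t using 1
    push_cast
    ring
  between i hi hid hcut := by
    rcases le_or_gt i (back m ξ t) with hle | hgt
    · have := hcut.back_le (t := t) (by omega)
      omega
    · have := hcut.ahead_le (t := t) (by omega)
      omega

lemma CutsUnbounded.forall_of_isBlock (h : CutsUnbounded m ξ) {P : ℤ → Prop}
    (hP : ∀ c d, IsBlock m ξ c d → ∀ i : Fin (d + 1), P (c + (i : ℕ))) (t : ℤ) : P t := by
  simpa using hP _ _ (h.isBlock t) ⟨back m ξ t, by omega⟩

lemma IsBlock.back_eq (h : IsBlock m ξ c d) {i : ℕ} (hi : i ≤ d) : back m ξ (c + i) = i := by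
  have left_mem : i ∈ {a : ℕ | IsCut m ξ (c + i - a)} := by simpa using h.left
  refine le_antisymm (Nat.sInf_le left_mem) (not_lt.1 fun hlt => ?_)
  have hcut : IsCut m ξ (c + i - back m ξ (c + i)) := Nat.sInf_mem ⟨i, left_mem⟩
  refine h.between (i - back m ξ (c + i)) (by omega) (by omega) ?_
  rwa [Nat.cast_sub hlt.le, ← add_sub_assoc]

lemma IsBlock.ahead_eq (h : IsBlock m ξ c d) {i : ℕ} (hi : i ≤ d) :
    ahead m ξ (c + i) = d - i := by
  have right_mem : d - i ∈ {b : ℕ | IsCut m ξ (c + i + 1 + b)} := by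
    rw [Set.mem_ofPred_eq, Nat.cast_sub hi]
    convert h.right using 1
    ring
  refine le_antisymm (Nat.sInf_le right_mem) (not_lt.1 fun hlt => ?_)
  have hcut : IsCut m ξ (c + i + 1 + ahead m ξ (c + i)) := Nat.sInf_mem ⟨d - i, right_mem⟩
  refine h.between (i + 1 + ahead m ξ (c + i)) (by omega) (by omega) ?_
  convert hcut using 1
  push_cast
  ring

lemma IsBlock.blockwise_apply (h : IsBlock m ξ c d) (H : ℤ → (d : ℕ) → Fin (d + 1) → β)
    (i : Fin (d + 1)) : blockwise m ξ H (c + (i : ℕ)) = H c d i := by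
  obtain ⟨i, hi⟩ := i
  obtain ⟨e, rfl⟩ := Nat.exists_eq_add_of_le (Nat.le_of_lt_succ hi)
  rw [blockwise_eq H (h.back_eq (Nat.le_add_right i e))
    ((h.ahead_eq (Nat.le_add_right i e)).trans (Nat.add_sub_cancel_left i e)), add_sub_cancel_right]

lemma IsBlock.window_blockwise (h : IsBlock m ξ c d) (H : ℤ → (d : ℕ) → Fin (d + 1) → β) :
    window (blockwise m ξ H) c d = H c d :=
  funext (h.blockwise_apply H)

lemma IsCut.congr (h : IsCut m ξ c) (hξ : ∀ i : ℕ, i < m → ξ' (c + i) = ξ (c + i)) :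
    IsCut m ξ' c :=
  fun i hi => (hξ i hi).trans (h i hi)

lemma IsBlock.congr (h : IsBlock m ξ c d)
    (hξ : ∀ i : ℕ, i < d + 1 + m → ξ' (c + i) = ξ (c + i)) : IsBlock m ξ' c d where
  left := h.left.congr fun i hi => hξ i (by omega)
  right := h.right.congr fun i hi => by simpa [add_assoc] using hξ (d + 1 + i) (by omega)
  between i hi hid hcut := h.between i hi hid <| hcut.congr fun j hj => by
    simpa [add_assoc] using (hξ (i + j) (by omega)).symm

lemma exists_isBlock_between (hcuts : CutsUnbounded m ξ) (h₀ : IsCut m ξ c₀)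
    (h₁ : IsCut m ξ c₁) (ht : t ∈ Finset.Ico c₀ c₁) :
    ∃ (c : ℤ) (d : ℕ), IsBlock m ξ c d ∧ c₀ ≤ c ∧ c + d + 1 ≤ c₁ ∧
      ∃ i : Fin (d + 1), t = c + (i : ℕ) := by
  rw [Finset.mem_Ico] at ht
  have := h₀.back_le ht.1
  have := h₁.ahead_le ht.2
  exact ⟨_, _, hcuts.isBlock t, by omega, by push_cast; omega, ⟨back m ξ t, by omega⟩, by simp⟩

lemma CutsUnbounded.exists_interval_superset (hcuts : CutsUnbounded m ξ) (F : Finset ℤ) :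
    ∃ (c : ℤ) (d : ℕ), IsCut m ξ c ∧ IsCut m ξ (c + d + 1) ∧ F ⊆ Finset.Ico c (c + d + 1) := by
  obtain ⟨N, hN⟩ : ∃ N : ℕ, ∀ t ∈ F, t.natAbs ≤ N :=
    ⟨F.sup Int.natAbs, fun t ht => Finset.le_sup (f := Int.natAbs) ht⟩
  obtain ⟨c₀, hc₀, h₀⟩ := (hcuts (-N)).1
  obtain ⟨c₁, hc₁, h₁⟩ := (hcuts N).2
  have right_end : c₀ + (c₁ - c₀ - 1).toNat + 1 = c₁ := by omega
  refine ⟨c₀, (c₁ - c₀ - 1).toNat, h₀, by rwa [right_end], fun t ht => ?_⟩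
  have := hN t ht
  rw [Finset.mem_Ico]
  omega

lemma mem_Ico_iff_exists_fin :
    t ∈ Finset.Ico c (c + d + 1) ↔ ∃ i : Fin (d + 1), t = c + (i : ℕ) := by
  rw [Finset.mem_Ico]
  exact ⟨fun ht => ⟨⟨(t - c).toNat, by omega⟩, by simp only; omega⟩, by rintro ⟨i, rfl⟩; omega⟩

lemma forall_mem_Ico_iff_forall_fin {P : ℤ → Prop} :
    (∀ t ∈ Finset.Ico c (c + d + 1), P t) ↔ ∀ i : Fin (d + 1), P (c + (i : ℕ)) := by
  simp only [mem_Ico_iff_exists_fin]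
  exact ⟨fun h i => h _ ⟨i, rfl⟩, by rintro h _ ⟨i, rfl⟩; exact h i⟩

lemma window_eq_window_iff {x y : ℤ → β} :
    window x c d = window y c d ↔ ∀ t ∈ Finset.Ico c (c + d + 1), x t = y t := by
  rw [funext_iff, forall_mem_Ico_iff_forall_fin]
  rfl

lemma exists_window_eq (c : ℤ) (v : Fin (d + 1) → β) : ∃ x : ℤ → β, window x c d = v :=
  ⟨fun t => v (Fin.ofNat (d + 1) (t - c).toNat), funext fun i => by simp [window]⟩

lemma prod_Ico_eq_prod_fin {M : Type*} [CommMonoid M] (f : ℤ → M) (c : ℤ) (d : ℕ) :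
    ∏ t ∈ Finset.Ico c (c + d + 1), f t = ∏ i : Fin (d + 1), f (c + (i : ℕ)) :=
  (Finset.prod_bij (s := Finset.univ) (fun (i : Fin (d + 1)) _ => c + (i : ℕ))
    (fun i _ => mem_Ico_iff_exists_fin.2 ⟨i, rfl⟩)
    (fun i _ j _ h => Fin.ext (by omega))
    (fun t ht => (mem_Ico_iff_exists_fin.1 ht).imp fun i hi => ⟨Finset.mem_univ i, hi.symm⟩)
    fun _ _ => rfl).symm

lemma prod_Ico_congr_of_isBlock {M : Type*} [CommMonoid M] (hcuts : CutsUnbounded m ξ)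
    (h₁ : IsCut m ξ c₁) {f g : ℤ → M} (h₀ : IsCut m ξ c₀)
    (hfg : ∀ c d, IsBlock m ξ c d → c₀ ≤ c → c + d + 1 ≤ c₁ →
      ∏ i : Fin (d + 1), f (c + (i : ℕ)) = ∏ i : Fin (d + 1), g (c + (i : ℕ))) :
    ∏ t ∈ Finset.Ico c₀ c₁, f t = ∏ t ∈ Finset.Ico c₀ c₁, g t := by
  induction hn : (c₁ - c₀).toNat using Nat.strong_induction_on generalizing c₀ with
  | _ n ih =>
    rcases le_or_gt c₁ c₀ with hle | hlt
    · rw [Finset.Ico_eq_empty (not_lt.2 hle), Finset.prod_empty, Finset.prod_empty]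
    obtain ⟨c, d, block, hc, hd, i, hi⟩ :=
      exists_isBlock_between hcuts h₀ h₁ (Finset.mem_Ico.2 ⟨le_rfl, hlt⟩)
    obtain rfl : c = c₀ := by omega
    rw [← Finset.Ico_union_Ico_eq_Ico (by omega : c ≤ c + d + 1) hd,
      Finset.prod_union (Finset.Ico_disjoint_Ico_consecutive _ _ _),
      Finset.prod_union (Finset.Ico_disjoint_Ico_consecutive _ _ _),
      prod_Ico_eq_prod_fin, prod_Ico_eq_prod_fin, hfg c d block le_rfl hd,
      ih _ (by omega) block.right (fun c' d' block' hc' => hfg c' d' block' (by omega)) rfl]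

end Blocks


/-! ### Refining a sequence of letters block by block -/

/-- A refinement of the letters `a : A` by letters `b ∈ fiber a` with conditional probabilities
`weight b`, together with a box partition of the cube for every word `w` over `A`: the boxes are
indexed by the words refining `w`, and their volumes are the conditional probabilities. -/
structure CellSystem (A B : Type*) where
  fiber : A → Finset B
  weight : B → ℝ
  lower : ∀ {d : ℕ}, (Fin (d + 1) → A) → (Fin (d + 1) → B) → Fin (d + 1) → ℝ
  side : ∀ {d : ℕ}, (Fin (d + 1) → A) → (Fin (d + 1) → B) → Fin (d + 1) → ℝ
  weight_pos : ∀ a, ∀ b ∈ fiber a, 0 < weight b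
  sum_weight : ∀ a, (fiber a).Nonempty → ∑ b ∈ fiber a, weight b = 1
  isBoxPartition : ∀ {d : ℕ} (w : Fin (d + 1) → A), (∀ i, (fiber (w i)).Nonempty) →
    IsBoxPartition (Fintype.piFinset fun i => fiber (w i)) (fun v => ∏ i, weight (v i))
      (lower w) (side w)
  longMass_le : ∀ {d : ℕ} (w : Fin (d + 1) → A), (∀ i, (fiber (w i)).Nonempty) →
    longMass (Fintype.piFinset fun i => fiber (w i)) (fun v => ∏ i, weight (v i)) (side w) ≤
      2 * heavyMass (Fintype.piFinset fun i => fiber (w i)) (fun v => ∏ i, weight (v i)) (d + 1)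

namespace CellSystem

variable {A B : Type*}

lemma exists_fiber_eq (fiber : A → Finset B) (weight : B → ℝ)
    (hpos : ∀ a, ∀ b ∈ fiber a, 0 < weight b)
    (hsum : ∀ a, (fiber a).Nonempty → ∑ b ∈ fiber a, weight b = 1) :
    ∃ C : CellSystem A B, C.fiber = fiber ∧ C.weight = weight := by
  have partitions (d : ℕ) (w : Fin (d + 1) → A) :
      ∃ lower side : (Fin (d + 1) → B) → Fin (d + 1) → ℝ, (∀ i, (fiber (w i)).Nonempty) →
        IsBoxPartition (Fintype.piFinset fun i => fiber (w i)) (fun v => ∏ i, weight (v i))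
          lower side ∧
        longMass (Fintype.piFinset fun i => fiber (w i)) (fun v => ∏ i, weight (v i)) side ≤
          2 * heavyMass (Fintype.piFinset fun i => fiber (w i)) (fun v => ∏ i, weight (v i))
            (d + 1) := by
    by_cases hw : ∀ i, (fiber (w i)).Nonempty
    · obtain ⟨lower, side, h⟩ := exists_isBoxPartition_longMass_le d
        (fun v hv => Finset.prod_pos fun i _ => hpos _ _ (Fintype.mem_piFinset.1 hv i))
        (Fintype.piFinset_nonempty.2 hw)
      exact ⟨lower, side, fun _ => h⟩
    · exact ⟨0, 0, fun h => absurd h hw⟩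
  choose lower side h using partitions
  exact ⟨⟨fiber, weight, lower _, side _, hpos, hsum, fun w hw => (h _ w hw).1,
    fun w hw => (h _ w hw).2⟩, rfl, rfl⟩

variable (C : CellSystem A B) {m d : ℕ} {c c₀ c₁ t : ℤ}

/-- The words refining `w`. -/
def words (w : Fin (d + 1) → A) : Finset (Fin (d + 1) → B) :=
  Fintype.piFinset fun i => C.fiber (w i)

/-- The box of the partition attached to `w` that is indexed by `v`. -/
def box (w : Fin (d + 1) → A) (v : Fin (d + 1) → B) : Set (Fin (d + 1) → ℝ) :=
  {u | ∀ i, u i ∈ Set.Ico (C.lower w v i) (C.lower w v i + C.side w v i)}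

/-- The word refining `w` whose box contains `u` (an arbitrary word if there is none). -/
@[irreducible] def label [Nonempty B] (w : Fin (d + 1) → A) (u : Fin (d + 1) → ℝ) :
    Fin (d + 1) → B :=
  Classical.epsilon fun v => v ∈ C.words w ∧ u ∈ C.box w v

variable {C} {w : Fin (d + 1) → A} {v : Fin (d + 1) → B} {u : Fin (d + 1) → ℝ}

lemma mem_words : v ∈ C.words w ↔ ∀ i, v i ∈ C.fiber (w i) := Fintype.mem_piFinset

lemma fiber_nonempty_of_mem_words (hv : v ∈ C.words w) (i : Fin (d + 1)) :
    (C.fiber (w i)).Nonempty :=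
  ⟨_, mem_words.1 hv i⟩

lemma isBoxPartition_of_mem_words (hv : v ∈ C.words w) :
    IsBoxPartition (C.words w) (fun v => ∏ i, C.weight (v i)) (C.lower w) (C.side w) :=
  C.isBoxPartition w (fiber_nonempty_of_mem_words hv)

lemma sum_words_prod_weight (hw : ∀ i, (C.fiber (w i)).Nonempty) :
    ∑ v ∈ C.words w, ∏ i, C.weight (v i) = 1 := by
  rw [words, ← Finset.prod_univ_sum]
  exact Finset.prod_eq_one fun i _ => C.sum_weight _ (hw i)

lemma prod_side (hv : v ∈ C.words w) : ∏ i, C.side w v i = ∏ i, C.weight (v i) := by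
  have h := (isBoxPartition_of_mem_words hv).prod_side_mul v hv
  rwa [sum_words_prod_weight (fiber_nonempty_of_mem_words hv), mul_one] at h

lemma existsUnique_mem_box (hw : ∀ i, (C.fiber (w i)).Nonempty)
    (hu : ∀ i, u i ∈ Set.Ico (0 : ℝ) 1) : ∃! v, v ∈ C.words w ∧ u ∈ C.box w v :=
  (C.isBoxPartition w hw).existsUnique_box u hu

lemma label_spec [Nonempty B] (hw : ∀ i, (C.fiber (w i)).Nonempty)
    (hu : ∀ i, u i ∈ Set.Ico (0 : ℝ) 1) :
    C.label w u ∈ C.words w ∧ u ∈ C.box w (C.label w u) := by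
  rw [label]
  exact Classical.epsilon_spec (existsUnique_mem_box hw hu).exists

lemma label_eq [Nonempty B] (hv : v ∈ C.words w) (huv : u ∈ C.box w v) : C.label w u = v := by
  have partition := isBoxPartition_of_mem_words hv
  have hu (i : Fin (d + 1)) : u i ∈ Set.Ico (0 : ℝ) 1 :=
    ⟨(partition.lower_nonneg v hv i).trans (huv i).1,
      (huv i).2.trans_le (partition.lower_add_side_le v hv i)⟩
  exact (existsUnique_mem_box (fiber_nonempty_of_mem_words hv) hu).unique
    (label_spec (fiber_nonempty_of_mem_words hv) hu) ⟨hv, huv⟩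

variable {ξ : ℤ → A} {z : ℤ → ℝ} {η η' : ℤ → B}

lemma window_mem_words (h : ∀ t ∈ Finset.Ico c₀ c₁, η t ∈ C.fiber (ξ t)) (hc : c₀ ≤ c)
    (hd : c + d + 1 ≤ c₁) : window η c d ∈ C.words (window ξ c d) :=
  mem_words.2 fun i => h _ (Finset.mem_Ico.2 (by omega))

variable (C) [Zero A]

/-- The lower ends of the sides of the boxes labelled by the blocks of `η`. -/
def lowerAt (m : ℕ) (ξ : ℤ → A) (η : ℤ → B) : ℤ → ℝ :=
  blockwise m ξ fun c d => C.lower (window ξ c d) (window η c d)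

/-- The lengths of the sides of the boxes labelled by the blocks of `η`. -/
def sideAt (m : ℕ) (ξ : ℤ → A) (η : ℤ → B) : ℤ → ℝ :=
  blockwise m ξ fun c d => C.side (window ξ c d) (window η c d)

/-- The sequences of letters that can be refined with cuts at runs of `m` zeros. -/
structure IsAdmissible (m : ℕ) (ξ : ℤ → A) : Prop where
  cuts : CutsUnbounded m ξ
  fiber_nonempty : ∀ t, (C.fiber (ξ t)).Nonempty

lemma lowerAt_shift (m : ℕ) (ξ : ℤ → A) (η : ℤ → B) :
    C.lowerAt m (shift ξ) (shift η) = shift (C.lowerAt m ξ η) := by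
  simp only [lowerAt, window_shift]
  exact blockwise_shift fun c d => C.lower (window ξ c d) (window η c d)

lemma sideAt_shift (m : ℕ) (ξ : ℤ → A) (η : ℤ → B) :
    C.sideAt m (shift ξ) (shift η) = shift (C.sideAt m ξ η) := by
  simp only [sideAt, window_shift]
  exact blockwise_shift fun c d => C.side (window ξ c d) (window η c d)

variable {C}

lemma lowerAt_sideAt_congr (hcuts : CutsUnbounded m ξ) (h₀ : IsCut m ξ c₀) (h₁ : IsCut m ξ c₁)
    (h : ∀ t ∈ Finset.Ico c₀ c₁, η t = η' t) (ht : t ∈ Finset.Ico c₀ c₁) :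
    C.lowerAt m ξ η t = C.lowerAt m ξ η' t ∧ C.sideAt m ξ η t = C.sideAt m ξ η' t := by
  obtain ⟨c, d, block, hc, hd, i, rfl⟩ := exists_isBlock_between hcuts h₀ h₁ ht
  have same_window : window η c d = window η' c d :=
    funext fun j => h _ (Finset.mem_Ico.2 (by omega))
  simp only [lowerAt, sideAt, block.blockwise_apply, same_window, and_self]

lemma side_bounds (hcuts : CutsUnbounded m ξ) (h₀ : IsCut m ξ c₀) (h₁ : IsCut m ξ c₁)
    (hη : ∀ t ∈ Finset.Ico c₀ c₁, η t ∈ C.fiber (ξ t)) (ht : t ∈ Finset.Ico c₀ c₁) :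
    0 ≤ C.lowerAt m ξ η t ∧ 0 < C.sideAt m ξ η t ∧
      C.lowerAt m ξ η t + C.sideAt m ξ η t ≤ 1 := by
  obtain ⟨c, d, block, hc, hd, i, rfl⟩ := exists_isBlock_between hcuts h₀ h₁ ht
  have hv := window_mem_words hη hc hd
  have partition := isBoxPartition_of_mem_words hv
  rw [lowerAt, sideAt, block.blockwise_apply, block.blockwise_apply]
  exact ⟨partition.lower_nonneg _ hv i, partition.side_pos _ hv i,
    partition.lower_add_side_le _ hv i⟩

lemma prod_sideAt (hcuts : CutsUnbounded m ξ) (h₀ : IsCut m ξ c₀) (h₁ : IsCut m ξ c₁)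
    (hη : ∀ t ∈ Finset.Ico c₀ c₁, η t ∈ C.fiber (ξ t)) :
    ∏ t ∈ Finset.Ico c₀ c₁, C.sideAt m ξ η t = ∏ t ∈ Finset.Ico c₀ c₁, C.weight (η t) :=
  prod_Ico_congr_of_isBlock hcuts h₁ h₀ fun c d block hc hd => by
    simp only [sideAt, block.blockwise_apply]
    exact prod_side (window_mem_words hη hc hd)

variable (C) [Nonempty B]

/-- The refined sequence of letters: on each block of `ξ` it is the label of the coordinates. -/
def relabel (m : ℕ) (ξ : ℤ → A) (z : ℤ → ℝ) : ℤ → B :=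
  blockwise m ξ fun c d => C.label (window ξ c d) (window z c d)

/-- The coordinates relative to the boxes containing them. -/
def rescale (m : ℕ) (ξ : ℤ → A) (z : ℤ → ℝ) (t : ℤ) : ℝ :=
  (z t - C.lowerAt m ξ (C.relabel m ξ z) t) / C.sideAt m ξ (C.relabel m ξ z) t

lemma relabel_shift (m : ℕ) (ξ : ℤ → A) (z : ℤ → ℝ) :
    C.relabel m (shift ξ) (shift z) = shift (C.relabel m ξ z) := by
  simp only [relabel, window_shift]
  exact blockwise_shift fun c d => C.label (window ξ c d) (window z c d)

lemma rescale_shift (m : ℕ) (ξ : ℤ → A) (z : ℤ → ℝ) :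
    C.rescale m (shift ξ) (shift z) = shift (C.rescale m ξ z) := by
  funext t
  rw [rescale, relabel_shift, lowerAt_shift, sideAt_shift]
  rfl

variable {C}

lemma IsAdmissible.relabel_spec (h : C.IsAdmissible m ξ) (hz : ∀ t, z t ∈ Set.Ico (0 : ℝ) 1)
    (t : ℤ) : C.relabel m ξ z t ∈ C.fiber (ξ t) ∧
      z t ∈ Set.Ico (C.lowerAt m ξ (C.relabel m ξ z) t)
        (C.lowerAt m ξ (C.relabel m ξ z) t + C.sideAt m ξ (C.relabel m ξ z) t) := by
  revert t
  refine h.cuts.forall_of_isBlock fun c d block i => ?_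
  have spec := label_spec (C := C) (w := window ξ c d) (u := window z c d)
    (fun i => h.fiber_nonempty _) fun i => hz _
  rw [lowerAt, sideAt, block.blockwise_apply, block.blockwise_apply, relabel,
    block.window_blockwise, block.blockwise_apply]
  exact ⟨mem_words.1 spec.1 i, spec.2 i⟩

lemma IsAdmissible.relabel_eq_iff (h : C.IsAdmissible m ξ)
    (hz : ∀ t, z t ∈ Set.Ico (0 : ℝ) 1) (h₀ : IsCut m ξ c₀) (h₁ : IsCut m ξ c₁)
    (hη : ∀ t ∈ Finset.Ico c₀ c₁, η t ∈ C.fiber (ξ t)) :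
    (∀ t ∈ Finset.Ico c₀ c₁, C.relabel m ξ z t = η t) ↔ ∀ t ∈ Finset.Ico c₀ c₁,
      z t ∈ Set.Ico (C.lowerAt m ξ η t) (C.lowerAt m ξ η t + C.sideAt m ξ η t) := by
  constructor <;> intro hyp t ht
  · obtain ⟨lower_eq, side_eq⟩ := lowerAt_sideAt_congr (C := C) h.cuts h₀ h₁ hyp ht
    rw [← lower_eq, ← side_eq]
    exact (h.relabel_spec hz t).2
  · obtain ⟨c, d, block, hc, hd, i, rfl⟩ := exists_isBlock_between h.cuts h₀ h₁ ht
    have mem_box : window z c d ∈ C.box (window ξ c d) (window η c d) := fun j => by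
      have := hyp (c + (j : ℕ)) (Finset.mem_Ico.2 (by omega))
      rwa [lowerAt, sideAt, block.blockwise_apply, block.blockwise_apply] at this
    rw [relabel, block.blockwise_apply,
      label_eq (u := window z c d) (window_mem_words hη hc hd) mem_box]
    rfl

end CellSystem

/-! ### Measurability of the refinement -/

lemma measurable_nat_sInf {X : Type*} [MeasurableSpace X] {Q : ℕ → X → Prop}
    (hQ : ∀ a, MeasurableSet {x | Q a x}) : Measurable fun x => sInf {a : ℕ | Q a x} := by
  refine measurable_of_Iic fun n => ?_
  have preimage_eq : (fun x => sInf {a : ℕ | Q a x}) ⁻¹' Set.Iic n =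
      (⋂ a, {x | Q a x}ᶜ) ∪ ⋃ a ∈ Set.Iic n, {x | Q a x} := by
    ext x
    simp only [Set.mem_preimage, Set.mem_Iic, Set.mem_union, Set.mem_iInter, Set.mem_compl_iff,
      Set.mem_ofPred_eq, Set.mem_iUnion, exists_prop]
    constructor
    · intro h
      by_cases hne : {a : ℕ | Q a x}.Nonempty
      · exact Or.inr ⟨_, h, Nat.sInf_mem hne⟩
      · exact Or.inl fun a ha => hne ⟨a, ha⟩
    · rintro (h | ⟨a, ha, hQ⟩)
      · simp [h]
      · exact (Nat.sInf_le hQ).trans ha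
  rw [preimage_eq]
  exact (MeasurableSet.iInter fun a => (hQ a).compl).union
    (MeasurableSet.biUnion (Set.to_countable _) fun a _ => hQ a)

section Measurability

variable {A β X : Type*} [MeasurableSpace A] [MeasurableSpace β] [MeasurableSpace X]

lemma measurable_window (c : ℤ) (d : ℕ) : Measurable fun x : ℤ → β => window x c d :=
  measurable_pi_lambda _ fun _ => measurable_pi_apply _

variable [MeasurableSingletonClass A] [Zero A] (m : ℕ)

lemma measurableSet_isCut (c : ℤ) : MeasurableSet {ξ : ℤ → A | IsCut m ξ c} := by
  simp only [IsCut, Set.ofPred_forall]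
  exact MeasurableSet.iInter fun i => MeasurableSet.iInter fun _ =>
    (measurable_pi_apply _) (measurableSet_singleton 0)

lemma measurableSet_cutsUnbounded : MeasurableSet {ξ : ℤ → A | CutsUnbounded m ξ} := by
  simp only [CutsUnbounded, Set.ofPred_forall, Set.ofPred_and, Set.ofPred_exists]
  refine MeasurableSet.iInter fun t => MeasurableSet.inter ?_ ?_ <;>
  exact MeasurableSet.iUnion fun c => MeasurableSet.inter (by simp) (measurableSet_isCut m c)

lemma measurable_back (t : ℤ) : Measurable fun ξ : ℤ → A => back m ξ t :=
  measurable_nat_sInf fun _ => measurableSet_isCut m _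

lemma measurable_ahead (t : ℤ) : Measurable fun ξ : ℤ → A => ahead m ξ t :=
  measurable_nat_sInf fun _ => measurableSet_isCut m _

lemma measurable_blockwise {f : X → ℤ → A} (hf : Measurable f)
    {H : X → ℤ → (d : ℕ) → Fin (d + 1) → β} (hH : ∀ c d, Measurable fun x => H x c d) :
    Measurable fun x => blockwise m (f x) (H x) := by
  refine measurable_pi_lambda _ fun t => ?_
  have fixed_block : Measurable fun y : (ℕ × ℕ) × X =>
      H y.2 (t - y.1.1) (y.1.1 + y.1.2) ⟨y.1.1, by omega⟩ :=
    measurable_from_prod_countable_right fun y =>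
      (measurable_pi_apply (⟨y.1, by omega⟩ : Fin (y.1 + y.2 + 1))).comp
        (hH (t - y.1) (y.1 + y.2))
  exact fixed_block.comp ((((measurable_back m t).comp hf).prodMk
    ((measurable_ahead m t).comp hf)).prodMk measurable_id)

end Measurability

namespace CellSystem

variable {A B : Type*} [MeasurableSpace B] (C : CellSystem A B)

/-- The label only depends on which of the finitely many boxes contain the point. -/
lemma measurable_label [Nonempty B] {d : ℕ} (w : Fin (d + 1) → A) : Measurable (C.label w) := by
  have measurableSet_box (v) : MeasurableSet (C.box w v) := by
    simp only [box, Set.ofPred_forall]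
    exact MeasurableSet.iInter fun i => measurable_pi_apply i measurableSet_Ico
  have measurable_mem : Measurable fun u (v : C.words w) => u ∈ C.box w v :=
    measurable_pi_lambda _ fun v => measurable_mem.2 (measurableSet_box v)
  let choice (P : C.words w → Prop) : Fin (d + 1) → B :=
    Classical.epsilon fun v => ∃ h : v ∈ C.words w, P ⟨v, h⟩
  have factor : C.label w = choice ∘ fun u v => u ∈ C.box w v := by
    funext u
    simp only [label, choice, Function.comp_apply, exists_prop]
  rw [factor]
  exact (measurable_of_countable choice).comp measurable_mem

variable [Zero A] [Countable A] [MeasurableSpace A] [MeasurableSingletonClass A] (m : ℕ)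

lemma measurable_relabel [Nonempty B] :
    Measurable fun x : (ℤ → A) × (ℤ → ℝ) => C.relabel m x.1 x.2 := by
  have label_uncurried (d : ℕ) : Measurable
      fun y : (Fin (d + 1) → A) × (Fin (d + 1) → ℝ) => C.label y.1 y.2 :=
    measurable_from_prod_countable_right fun w => C.measurable_label w
  exact measurable_blockwise m measurable_fst fun c d => (label_uncurried d).comp
    (((measurable_window c d).comp measurable_fst).prodMk
      ((measurable_window c d).comp measurable_snd))

variable [Countable B] [MeasurableSingletonClass B]

lemma measurable_blockwise_words {β : Type*} [MeasurableSpace β]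
    (H : ∀ {d : ℕ}, (Fin (d + 1) → A) → (Fin (d + 1) → B) → Fin (d + 1) → β) :
    Measurable fun x : (ℤ → A) × (ℤ → B) =>
      blockwise m x.1 fun c d => H (window x.1 c d) (window x.2 c d) :=
  measurable_blockwise m measurable_fst fun c d =>
    (measurable_of_countable fun y : (Fin (d + 1) → A) × (Fin (d + 1) → B) => H y.1 y.2).comp
      (((measurable_window c d).comp measurable_fst).prodMk
        ((measurable_window c d).comp measurable_snd))

lemma measurable_lowerAt : Measurable fun x : (ℤ → A) × (ℤ → B) => C.lowerAt m x.1 x.2 :=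
  measurable_blockwise_words m C.lower

lemma measurable_sideAt : Measurable fun x : (ℤ → A) × (ℤ → B) => C.sideAt m x.1 x.2 :=
  measurable_blockwise_words m C.side

lemma measurable_rescale [Nonempty B] :
    Measurable fun x : (ℤ → A) × (ℤ → ℝ) => C.rescale m x.1 x.2 := by
  have h := measurable_fst.prodMk (C.measurable_relabel m)
  exact measurable_pi_lambda _ fun t => (((measurable_pi_apply t).comp measurable_snd).sub
    ((measurable_pi_apply t).comp ((C.measurable_lowerAt m).comp h))).div
      ((measurable_pi_apply t).comp ((C.measurable_sideAt m).comp h))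

end CellSystem

/-! ### The law of the refined sequence for fixed letters -/

/-- The law of a bi-infinite sequence of independent variables with law `r`. -/
def iid {A : Type*} [MeasurableSpace A] (r : Measure A) : Measure (ℤ → A) :=
  Measure.infinitePi fun _ => r

instance {A : Type*} [MeasurableSpace A] (r : Measure A) [IsProbabilityMeasure r] :
    IsProbabilityMeasure (iid r) := by
  unfold iid
  infer_instance

lemma ae_iid_of_ae {A : Type*} [MeasurableSpace A] {r : Measure A} [IsProbabilityMeasure r]
    {P : A → Prop} (h : ∀ᵐ a ∂r, P a) : ∀ᵐ x ∂iid r, ∀ t, P (x t) :=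
  ae_all_iff.2 fun t =>
    (measurePreserving_eval_infinitePi (fun _ : ℤ => r) t).quasiMeasurePreserving.ae h

/-- Lebesgue measure on the unit interval, as a measure on the line. -/
def unitMeasure : Measure ℝ := volume.restrict (Set.Ico 0 1)

instance : IsProbabilityMeasure unitMeasure := ⟨by simp [unitMeasure]⟩

lemma ae_iid_unitMeasure_mem_Ico : ∀ᵐ z ∂iid unitMeasure, ∀ t, z t ∈ Set.Ico (0 : ℝ) 1 :=
  ae_iid_of_ae (ae_restrict_mem measurableSet_Ico)

lemma measurableSet_rescale (a l : ℝ) {S : Set ℝ} (hS : MeasurableSet S) :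
    MeasurableSet {x | x ∈ Set.Ico a (a + l) ∧ (x - a) / l ∈ S} :=
  measurableSet_Ico.inter ((by fun_prop : Measurable fun x : ℝ => (x - a) / l) hS)

lemma unitMeasure_rescale {a l : ℝ} (ha : 0 ≤ a) (hl : 0 < l) (hal : a + l ≤ 1) {S : Set ℝ}
    (hS : MeasurableSet S) :
    unitMeasure {x | x ∈ Set.Ico a (a + l) ∧ (x - a) / l ∈ S}
      = ENNReal.ofReal l * unitMeasure S := by
  have affine_preimage : {x | x ∈ Set.Ico a (a + l) ∧ (x - a) / l ∈ S} ∩ Set.Ico 0 1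
      = (fun x => x + -a) ⁻¹' ((fun x => x * l⁻¹) ⁻¹' (S ∩ Set.Ico 0 1)) := by
    ext x
    simp only [Set.mem_inter_iff, Set.mem_ofPred_eq, Set.mem_Ico, Set.mem_preimage,
      ← div_eq_mul_inv, ← sub_eq_add_neg, le_div_iff₀ hl, div_lt_iff₀ hl]
    constructor
    · rintro ⟨⟨⟨_, _⟩, hx⟩, _, _⟩
      exact ⟨hx, by linarith, by linarith⟩
    · rintro ⟨hx, _, _⟩
      exact ⟨⟨⟨by linarith, by linarith⟩, hx⟩, by linarith, by linarith⟩
  rw [unitMeasure, Measure.restrict_apply (measurableSet_rescale a l hS), affine_preimage,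
    measure_preimage_add_right, Real.volume_preimage_mul_right (inv_ne_zero hl.ne'), inv_inv,
    abs_of_pos hl, Measure.restrict_apply hS]

namespace CellSystem

lemma sum_filter_fiber {A B : Type*} [DecidableEq B] {C : CellSystem A B} {a : A}
    (ha : (C.fiber a).Nonempty) (p : Prop) [Decidable p] (b : B) :
    ∑ b' ∈ C.fiber a with p → b' = b, ENNReal.ofReal (C.weight b') =
      if p then (C.fiber a : Set B).indicator (fun b => ENNReal.ofReal (C.weight b)) b else 1 := by
  split_ifs with hp
  · simp only [hp, true_imp_iff, Finset.sum_filter, Finset.sum_ite_eq', Set.indicator_apply,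
      Finset.mem_coe]
  · simp only [hp, false_imp_iff, Finset.filter_true]
    rw [← ENNReal.ofReal_sum_of_nonneg fun b hb => (C.weight_pos _ b hb).le, C.sum_weight _ ha,
      ENNReal.ofReal_one]

lemma sum_words_prod_weight_mul {A B : Type*} [DecidableEq B] {C : CellSystem A B} {d : ℕ}
    {w : Fin (d + 1) → A} (hw : ∀ i, (C.fiber (w i)).Nonempty) (p : Fin (d + 1) → Prop)
    [DecidablePred p] (v : Fin (d + 1) → B) (f : Fin (d + 1) → ℝ≥0∞) :
    ∑ v' ∈ C.words w with ∀ i, p i → v' i = v i, ∏ i, ENNReal.ofReal (C.weight (v' i)) * f i =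
      ∏ i, (if p i then (C.fiber (w i) : Set B).indicator
        (fun b => ENNReal.ofReal (C.weight b)) (v i) else 1) * f i := by
  have filter_words : {v' ∈ C.words w | ∀ i, p i → v' i = v i} =
      Fintype.piFinset fun i => {b ∈ C.fiber (w i) | p i → b = v i} := by
    ext v'
    simp only [Finset.mem_filter, mem_words, Fintype.mem_piFinset, forall_and]
  rw [filter_words, ← Finset.prod_univ_sum (f := fun i b => ENNReal.ofReal (C.weight b) * f i)]
  exact Finset.prod_congr rfl fun i _ => by rw [← Finset.sum_mul, sum_filter_fiber (hw i)]

section Law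

variable {A B : Type*} [Zero A] [Nonempty B] {C : CellSystem A B} {m : ℕ} {ξ : ℤ → A}
  {c c₀ c₁ t : ℤ} {d : ℕ} {η : ℤ → B} {S : ℤ → Set ℝ}

lemma IsAdmissible.measure_relabel_eq (h : C.IsAdmissible m ξ) (h₀ : IsCut m ξ c₀)
    (h₁ : IsCut m ξ c₁) (hη : ∀ t ∈ Finset.Ico c₀ c₁, η t ∈ C.fiber (ξ t))
    (hS : ∀ t, MeasurableSet (S t)) :
    iid unitMeasure {z | ∀ t ∈ Finset.Ico c₀ c₁,
        C.relabel m ξ z t = η t ∧ C.rescale m ξ z t ∈ S t} =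
      ∏ t ∈ Finset.Ico c₀ c₁, ENNReal.ofReal (C.weight (η t)) * unitMeasure (S t) := by
  have bounds := fun t ht => side_bounds h.cuts h₀ h₁ hη (t := t) ht
  have ae_eq_pi : {z | ∀ t ∈ Finset.Ico c₀ c₁,
        C.relabel m ξ z t = η t ∧ C.rescale m ξ z t ∈ S t} =ᵐ[iid unitMeasure]
      Set.pi (Finset.Ico c₀ c₁ : Finset ℤ) fun t =>
        {x | x ∈ Set.Ico (C.lowerAt m ξ η t) (C.lowerAt m ξ η t + C.sideAt m ξ η t) ∧
          (x - C.lowerAt m ξ η t) / C.sideAt m ξ η t ∈ S t} := by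
    refine eventuallyEq_set.2 ?_
    filter_upwards [ae_iid_unitMeasure_mem_Ico] with z hz
    have rescale_eq (hz : ∀ t ∈ Finset.Ico c₀ c₁, C.relabel m ξ z t = η t) :
        ∀ t ∈ Finset.Ico c₀ c₁,
          C.rescale m ξ z t = (z t - C.lowerAt m ξ η t) / C.sideAt m ξ η t := fun t ht => by
      obtain ⟨lower_eq, side_eq⟩ := lowerAt_sideAt_congr (C := C) h.cuts h₀ h₁ hz ht
      rw [rescale, lower_eq, side_eq]
    have iff := h.relabel_eq_iff hz h₀ h₁ hη
    simp only [Set.mem_ofPred_eq, Set.mem_pi, Finset.mem_coe, forall_and (p := fun _ => _ → _),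
      imp_and, ← iff]
    exact and_congr_right fun hz => forall₂_congr fun t ht => by rw [rescale_eq hz t ht]
  rw [measure_congr ae_eq_pi, iid, Measure.infinitePi_pi _ fun t _ =>
      measurableSet_rescale _ _ (hS t), Finset.prod_congr rfl fun t ht =>
      unitMeasure_rescale (bounds t ht).1 (bounds t ht).2.1 (bounds t ht).2.2 (hS t),
    Finset.prod_mul_distrib, Finset.prod_mul_distrib,
    ← ENNReal.ofReal_prod_of_nonneg fun t ht => (bounds t ht).2.1.le,
    ← ENNReal.ofReal_prod_of_nonneg fun t ht => (C.weight_pos _ _ (hη t ht)).le,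
    prod_sideAt h.cuts h₀ h₁ hη]

variable [Countable A] [MeasurableSpace A] [MeasurableSingletonClass A] [Countable B]
  [MeasurableSpace B] [MeasurableSingletonClass B]

lemma IsAdmissible.measure_window_relabel (h : C.IsAdmissible m ξ) (h₀ : IsCut m ξ c)
    (h₁ : IsCut m ξ (c + d + 1)) (Q : (Fin (d + 1) → B) → Prop) [DecidablePred Q]
    (hS : ∀ t, MeasurableSet (S t)) :
    iid unitMeasure {z | Q (window (C.relabel m ξ z) c d) ∧
        ∀ t ∈ Finset.Ico c (c + d + 1), C.rescale m ξ z t ∈ S t} =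
      ∑ v ∈ C.words (window ξ c d) with Q v,
        ∏ i, ENNReal.ofReal (C.weight (v i)) * unitMeasure (S (c + (i : ℕ))) := by
  have measurable_relabel : Measurable fun z => C.relabel m ξ z :=
    (C.measurable_relabel m).comp measurable_prodMk_left
  have measurable_rescale : Measurable fun z => C.rescale m ξ z :=
    (C.measurable_rescale m).comp measurable_prodMk_left
  have ae_eq_iUnion : {z | Q (window (C.relabel m ξ z) c d) ∧
        ∀ t ∈ Finset.Ico c (c + d + 1), C.rescale m ξ z t ∈ S t} =ᵐ[iid unitMeasure]
      (⋃ v ∈ {v ∈ C.words (window ξ c d) | Q v}, {z | window (C.relabel m ξ z) c d = v ∧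
        ∀ t ∈ Finset.Ico c (c + d + 1), C.rescale m ξ z t ∈ S t} : Set (ℤ → ℝ)) := by
    refine eventuallyEq_set.2 ?_
    filter_upwards [ae_iid_unitMeasure_mem_Ico] with z hz
    have mem : window (C.relabel m ξ z) c d ∈ C.words (window ξ c d) :=
      mem_words.2 fun i => (h.relabel_spec hz _).1
    simp only [Set.mem_iUnion, Set.mem_ofPred_eq, Finset.mem_filter, exists_prop,
      exists_eq_left', and_left_comm (b := _ = _), mem, true_and]
  rw [measure_congr ae_eq_iUnion, measure_biUnion_finset]
  · refine Finset.sum_congr rfl fun v hv => ?_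
    have hv := (Finset.mem_filter.1 hv).1
    obtain ⟨η, rfl⟩ := exists_window_eq c v
    simp only [window_eq_window_iff, ← forall₂_and]
    rw [h.measure_relabel_eq h₀ h₁ (forall_mem_Ico_iff_forall_fin.2 (mem_words.1 hv)) hS,
      prod_Ico_eq_prod_fin]
    rfl
  · intro v _ v' _ hne
    exact Set.disjoint_left.2 fun z hz hz' => hne (hz.1.symm.trans hz'.1)
  · intro v _
    have measurableSet_rescale : MeasurableSet
        {z | ∀ t ∈ Finset.Ico c (c + d + 1), C.rescale m ξ z t ∈ S t} := by
      simp only [Set.ofPred_forall]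
      exact Finset.measurableSet_biInter _ fun t _ =>
        ((measurable_pi_apply t).comp measurable_rescale) (hS t)
    exact (((measurable_window c d).comp measurable_relabel) (measurableSet_singleton v)).inter
      measurableSet_rescale

lemma IsAdmissible.measure_relabel_cylinder (h : C.IsAdmissible m ξ) (F G : Finset ℤ) (η : ℤ → B)
    (hS : ∀ t, MeasurableSet (S t)) :
    iid unitMeasure {z | (∀ t ∈ F, C.relabel m ξ z t = η t) ∧ ∀ t ∈ G, C.rescale m ξ z t ∈ S t} =
      (∏ t ∈ F, (C.fiber (ξ t) : Set B).indicator (fun b => ENNReal.ofReal (C.weight b)) (η t)) *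
        ∏ t ∈ G, unitMeasure (S t) := by
  classical
  obtain ⟨c, d, h₀, h₁, hFG⟩ := h.cuts.exists_interval_superset (F ∪ G)
  have hF := Finset.union_subset_left hFG
  have hG := Finset.union_subset_right hFG
  let S' : ℤ → Set ℝ := fun t => if t ∈ G then S t else Set.univ
  have hS' (t : ℤ) : MeasurableSet (S' t) := by
    simp only [S']
    split_ifs
    exacts [hS t, MeasurableSet.univ]
  have window_form :
      {z | (∀ t ∈ F, C.relabel m ξ z t = η t) ∧ ∀ t ∈ G, C.rescale m ξ z t ∈ S t} =
        {z | (∀ i : Fin (d + 1), c + (i : ℕ) ∈ F →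
            window (C.relabel m ξ z) c d i = η (c + (i : ℕ))) ∧
          ∀ t ∈ Finset.Ico c (c + d + 1), C.rescale m ξ z t ∈ S' t} := by
    ext z
    refine and_congr ?_ ?_
    · refine Iff.trans ?_ (forall_mem_Ico_iff_forall_fin (P := fun t => t ∈ F → _ = η t))
      exact ⟨fun hz t _ => hz t, fun hz t ht => hz t (hF ht) ht⟩
    · simp only [S', Set.mem_ite_univ_right]
      exact ⟨fun hz t _ => hz t, fun hz t ht => hz t (hG ht) ht⟩
  have prod_extend {E : Finset ℤ} (hE : E ⊆ Finset.Ico c (c + d + 1)) (f : ℤ → ℝ≥0∞) :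
      ∏ t ∈ E, f t = ∏ t ∈ Finset.Ico c (c + d + 1), if t ∈ E then f t else 1 := by
    rw [Finset.prod_ite_mem, Finset.inter_eq_right.2 hE]
  rw [window_form, h.measure_window_relabel h₀ h₁
      (fun v => ∀ i : Fin (d + 1), c + (i : ℕ) ∈ F → v i = η (c + (i : ℕ))) hS',
    sum_words_prod_weight_mul (w := window ξ c d) (fun i => h.fiber_nonempty _)
      (fun i => c + (i : ℕ) ∈ F) (fun i => η (c + (i : ℕ))),
    prod_extend hF, prod_extend hG, ← Finset.prod_mul_distrib, prod_Ico_eq_prod_fin]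
  simp only [S', apply_ite unitMeasure, measure_univ]
  rfl

lemma IsAdmissible.measure_setOf_window_relabel (h : C.IsAdmissible m ξ) (h₀ : IsCut m ξ c)
    (h₁ : IsCut m ξ (c + d + 1)) (Q : (Fin (d + 1) → B) → Prop) [DecidablePred Q] :
    iid unitMeasure {z | Q (window (C.relabel m ξ z) c d)} =
      ENNReal.ofReal (∑ v ∈ C.words (window ξ c d) with Q v, ∏ i, C.weight (v i)) := by
  have law := h.measure_window_relabel h₀ h₁ Q (S := fun _ => Set.univ) fun _ => .univ
  have weight_nonneg : ∀ v ∈ C.words (window ξ c d), ∀ i, 0 ≤ C.weight (v i) := fun v hv i =>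
    (C.weight_pos _ _ (mem_words.1 hv i)).le
  simp only [Set.mem_univ, implies_true, and_true, measure_univ, mul_one] at law
  rw [law, ENNReal.ofReal_sum_of_nonneg fun v hv =>
    Finset.prod_nonneg fun i _ => weight_nonneg v (Finset.mem_of_mem_filter v hv) i]
  exact Finset.sum_congr rfl fun v hv => (ENNReal.ofReal_prod_of_nonneg fun i _ =>
    weight_nonneg v (Finset.mem_of_mem_filter v hv) i).symm

variable (C) in
/-- The block of `t` is labelled by a word of large conditional probability. -/
def IsHeavy (m : ℕ) (ξ : ℤ → A) (η : ℤ → B) (t : ℤ) : Prop :=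
  1 / 2 / 4 ^ (back m ξ t + ahead m ξ t + 1) <
    ∏ i, C.weight (window η (t - back m ξ t) (back m ξ t + ahead m ξ t) i)

lemma IsAdmissible.measure_sideAt_le (h : C.IsAdmissible m ξ) (t : ℤ) :
    iid unitMeasure {z | 3 / 4 < C.sideAt m ξ (C.relabel m ξ z) t} ≤
      2 * iid unitMeasure {z | C.IsHeavy m ξ (C.relabel m ξ z) t} := by
  classical
  have block := h.cuts.isBlock t
  simp only [IsHeavy, sideAt, blockwise]
  have long_subset (c : ℤ) (d : ℕ) (i : Fin (d + 1)) :
      {z | 3 / 4 < C.side (window ξ c d) (window (C.relabel m ξ z) c d) i} ⊆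
        {z | ∃ i, 3 / 4 < C.side (window ξ c d) (window (C.relabel m ξ z) c d) i} :=
    fun z hz => ⟨i, hz⟩
  refine (measure_mono (long_subset _ _ _)).trans ?_
  generalize t - (back m ξ t : ℤ) = c at block ⊢
  generalize back m ξ t + ahead m ξ t = d at block ⊢
  rw [h.measure_setOf_window_relabel block.left block.right
      fun v => ∃ i, 3 / 4 < C.side (window ξ c d) v i,
    h.measure_setOf_window_relabel block.left block.right
      fun v => 1 / 2 / 4 ^ (d + 1) < ∏ i, C.weight (v i),
    ← ENNReal.ofReal_ofNat, ← ENNReal.ofReal_mul (by norm_num)]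
  have total := sum_words_prod_weight (w := window ξ c d) fun i => h.fiber_nonempty _
  have bound := C.longMass_le (window ξ c d) fun i => h.fiber_nonempty _
  rw [words] at total
  rw [longMass, heavyMass, total] at bound
  exact ENNReal.ofReal_le_ofReal bound

end Law

end CellSystem

/-! ### Independent letters -/

lemma isCountablySpanning_of_univ_mem {X : Type*} {𝒞 : Set (Set X)} (h : Set.univ ∈ 𝒞) :
    IsCountablySpanning 𝒞 :=
  ⟨fun _ => Set.univ, fun _ => h, Set.iUnion_const _⟩

/-- The cylinder sets fixing finitely many letters of a bi-infinite sequence. -/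
def letterCylinders (A : Type*) : Set (Set (ℤ → A)) :=
  {S | ∃ (F : Finset ℤ) (η : ℤ → A), S = {x | ∀ t ∈ F, x t = η t}}

section LetterCylinders

variable {A : Type*}

lemma isPiSystem_letterCylinders : IsPiSystem (letterCylinders A) := by
  classical
  rintro _ ⟨F, η, rfl⟩ _ ⟨F', η', rfl⟩ ⟨x, hx, hx'⟩
  refine ⟨F ∪ F', x, ?_⟩
  ext y
  simp only [Set.mem_inter_iff, Set.mem_ofPred_eq, Finset.mem_union, or_imp, forall_and]
  exact and_congr (forall₂_congr fun t ht => by rw [hx t ht])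
    (forall₂_congr fun t ht => by rw [hx' t ht])

lemma univ_mem_letterCylinders [Nonempty A] : Set.univ ∈ letterCylinders A :=
  ⟨∅, Classical.arbitrary _, by simp⟩

variable [MeasurableSpace A] [MeasurableSingletonClass A]

lemma measurableSet_letterCylinder (F : Finset ℤ) (η : ℤ → A) :
    MeasurableSet {x : ℤ → A | ∀ t ∈ F, x t = η t} := by
  simp only [Set.ofPred_forall]
  exact F.measurableSet_biInter fun t _ => measurable_pi_apply t (measurableSet_singleton _)

lemma generateFrom_letterCylinders [Countable A] :
    MeasurableSpace.generateFrom (letterCylinders A) = MeasurableSpace.pi := by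
  refine le_antisymm (MeasurableSpace.generateFrom_le ?_) ?_
  · rintro _ ⟨F, η, rfl⟩
    exact measurableSet_letterCylinder F η
  · refine iSup_le fun t => ?_
    rintro _ ⟨S, -, rfl⟩
    have preimage_eq : (fun x : ℤ → A => x t) ⁻¹' S =
        ⋃ b ∈ S, {x | ∀ s ∈ ({t} : Finset ℤ), x s = b} := by
      ext x
      simp
    rw [preimage_eq]
    exact MeasurableSet.biUnion (Set.to_countable _) fun b _ =>
      MeasurableSpace.measurableSet_generateFrom ⟨{t}, fun _ => b, rfl⟩

lemma iid_letterCylinder (r : Measure A) [IsProbabilityMeasure r] (F : Finset ℤ) (η : ℤ → A) :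
    iid r {x | ∀ t ∈ F, x t = η t} = ∏ t ∈ F, r {η t} := by
  rw [iid, ← Measure.infinitePi_pi (fun _ => r) (s := F) (t := fun t => {η t})
    fun t _ => measurableSet_singleton _]
  rfl

variable [Countable A] [Nonempty A]

lemma ext_of_letterCylinders {μ ν : Measure (ℤ → A)} [IsFiniteMeasure μ]
    (h : ∀ (F : Finset ℤ) (η : ℤ → A), μ {x | ∀ t ∈ F, x t = η t} = ν {x | ∀ t ∈ F, x t = η t}) :
    μ = ν := by
  have eq_on : ∀ S ∈ letterCylinders A, μ S = ν S := by
    rintro _ ⟨F, η, rfl⟩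
    exact h F η
  exact ext_of_generate_finite _ generateFrom_letterCylinders.symm isPiSystem_letterCylinders
    eq_on (eq_on _ univ_mem_letterCylinders)

lemma ext_of_letterCylinders_prod {X : Type*} [MeasurableSpace X]
    {μ ν : Measure ((ℤ → A) × (ℤ → X))} [IsFiniteMeasure μ]
    (h : ∀ (F : Finset ℤ) (η : ℤ → A) (G : Finset ℤ) (S : ℤ → Set X),
      (∀ t, MeasurableSet (S t)) →
        μ ({x | ∀ t ∈ F, x t = η t} ×ˢ (G : Set ℤ).pi S) =
          ν ({x | ∀ t ∈ F, x t = η t} ×ˢ (G : Set ℤ).pi S)) :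
    μ = ν := by
  have univ_mem : Set.univ ∈ squareCylinders fun _ : ℤ => {s : Set X | MeasurableSet s} :=
    ⟨∅, fun _ => Set.univ, fun _ _ => MeasurableSet.univ, by simp⟩
  refine ext_of_generate_finite _
    (generateFrom_eq_prod generateFrom_letterCylinders generateFrom_squareCylinders
      (isCountablySpanning_of_univ_mem univ_mem_letterCylinders)
      (isCountablySpanning_of_univ_mem univ_mem)).symm
    (isPiSystem_letterCylinders.prod (isPiSystem_squareCylinders
      (fun _ => MeasurableSpace.isPiSystem_measurableSet) fun _ => MeasurableSet.univ)) ?_ ?_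
  · rintro _ ⟨_, ⟨F, η, rfl⟩, _, ⟨G, S, hS, rfl⟩, rfl⟩
    exact h F η G S fun t => hS t trivial
  · simpa using h ∅ (Classical.arbitrary _) ∅ (fun _ => Set.univ) fun _ => MeasurableSet.univ

end LetterCylinders

/-! ### Recurrence of cuts -/

section Recurrence

variable {A : Type*} [Zero A]

lemma isCut_iff_forall_mem_Ico {m : ℕ} {ξ : ℤ → A} {c : ℤ} :
    IsCut m ξ c ↔ ∀ t ∈ Finset.Ico c (c + m), ξ t = 0 := by
  constructor
  · intro h t ht
    rw [Finset.mem_Ico] at ht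
    have := h (t - c).toNat (by omega)
    rwa [Int.toNat_of_nonneg (by omega), add_sub_cancel] at this
  · intro h i hi
    exact h _ (Finset.mem_Ico.2 (by omega))

variable [MeasurableSpace A] [MeasurableSingletonClass A] {r : Measure A} [IsProbabilityMeasure r]

lemma iid_isCut (m : ℕ) (c : ℤ) : iid r {ξ | IsCut m ξ c} = r {0} ^ m := by
  simp only [isCut_iff_forall_mem_Ico]
  rw [iid_letterCylinder r _ fun _ => 0]
  simp

lemma iIndepSet_isCut (m : ℕ) {e : ℕ → ℤ}
    (he : Pairwise fun i j => Disjoint (Finset.Ico (e i) (e i + m)) (Finset.Ico (e j) (e j + m))) :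
    ProbabilityTheory.iIndepSet (fun j => {ξ | IsCut m ξ (e j)}) (iid r) := by
  classical
  rw [ProbabilityTheory.iIndepSet_iff_meas_biInter fun j => measurableSet_isCut m (e j)]
  intro J
  have inter_eq : ⋂ j ∈ J, {ξ : ℤ → A | IsCut m ξ (e j)} =
      {ξ | ∀ t ∈ J.biUnion fun j => Finset.Ico (e j) (e j + m), ξ t = 0} := by
    ext ξ
    simp only [Set.mem_iInter, Set.mem_ofPred_eq, isCut_iff_forall_mem_Ico, Finset.mem_biUnion]
    exact ⟨fun h t ⟨j, hj, ht⟩ => h j hj t ht, fun h j hj t ht => h t ⟨j, hj, ht⟩⟩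
  rw [inter_eq, iid_letterCylinder r _ fun _ => 0, Finset.prod_biUnion fun i _ j _ hij => he hij]
  refine Finset.prod_congr rfl fun j _ => ?_
  rw [iid_isCut]
  simp

lemma ae_frequently_isCut (hr : r {0} ≠ 0) (m : ℕ) {e : ℕ → ℤ}
    (he : Pairwise fun i j => Disjoint (Finset.Ico (e i) (e i + m)) (Finset.Ico (e j) (e j + m))) :
    ∀ᵐ ξ ∂iid r, ∃ᶠ j in atTop, IsCut m ξ (e j) := by
  have sum_eq_top : ∑' j, iid r {ξ | IsCut m ξ (e j)} = ⊤ := by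
    simp only [iid_isCut]
    exact ENNReal.tsum_const_eq_top_of_ne_zero (pow_ne_zero _ hr)
  have full := ProbabilityTheory.measure_limsup_eq_one (fun j => measurableSet_isCut m (e j))
    (iIndepSet_isCut m he) sum_eq_top
  have limsup_mem_ae := (mem_ae_iff_prob_eq_one
    (MeasurableSet.measurableSet_limsup fun j => measurableSet_isCut m (e j))).2 full
  filter_upwards [limsup_mem_ae] with ξ hξ
  exact mem_limsup_iff_frequently_mem.1 hξ

lemma ae_cutsUnbounded (hr : r {0} ≠ 0) (m : ℕ) : ∀ᵐ ξ ∂iid r, CutsUnbounded m ξ := by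
  have disjoint_Ico {e : ℕ → ℤ} (he : ∀ i j, i < j → e i + m ≤ e j ∨ e j + m ≤ e i) :
      Pairwise fun i j => Disjoint (Finset.Ico (e i) (e i + m)) (Finset.Ico (e j) (e j + m)) := by
    intro i j hij
    rw [Finset.disjoint_left]
    intro t ht ht'
    rw [Finset.mem_Ico] at ht ht'
    rcases lt_or_gt_of_ne hij with h | h <;> rcases he _ _ h with h | h <;> omega
  have cuts_left := ae_frequently_isCut hr m (e := fun j => -((m + 1) * j : ℕ))
    (disjoint_Ico fun i j hij => Or.inr (by push_cast; nlinarith))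
  have cuts_right := ae_frequently_isCut hr m (e := fun j => ((m + 1) * j : ℕ))
    (disjoint_Ico fun i j hij => Or.inl (by push_cast; nlinarith))
  filter_upwards [cuts_left, cuts_right] with ξ hleft hright t
  obtain ⟨i, hi, cut_i⟩ := frequently_atTop.1 hleft t.natAbs
  obtain ⟨j, hj, cut_j⟩ := frequently_atTop.1 hright (t.natAbs + 1)
  exact ⟨⟨_, by push_cast; nlinarith [abs_nonneg t, neg_abs_le t, Int.natCast_natAbs t], cut_i⟩,
    _, by push_cast; nlinarith [le_abs_self t, Int.natCast_natAbs t], cut_j⟩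

end Recurrence

/-! ### Refining a sequence of independent letters -/

namespace CellSystem

section Refines

variable {A B : Type*} [MeasurableSpace A] [MeasurableSpace B]

/-- The law `r'` of a letter `b` is obtained from the law `r` of the coarser letter `α b` by
choosing `b` in `C.fiber (α b)` with conditional probability `C.weight b`. -/
structure Refines (C : CellSystem A B) (α : B → A) (r : Measure A) (r' : Measure B) : Prop where
  map_eq : ∀ a, ∀ b ∈ C.fiber a, α b = a
  mass_eq : ∀ a, ∀ b ∈ C.fiber a, r' {b} = ENNReal.ofReal (C.weight b) * r {a}
  null : ∀ b, b ∉ C.fiber (α b) → r' {b} = 0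
  ae_nonempty : ∀ᵐ a ∂r, (C.fiber a).Nonempty

variable {C : CellSystem A B} {α : B → A} {r : Measure A} {r' : Measure B} {m : ℕ}

lemma Refines.prod_indicator_fiber (h : C.Refines α r r') (F : Finset ℤ) (ξ : ℤ → A) (η : ℤ → B) :
    ∏ t ∈ F, (C.fiber (ξ t) : Set B).indicator (fun b => ENNReal.ofReal (C.weight b)) (η t) =
      {ξ | ∀ t ∈ F, ξ t = α (η t)}.indicator (fun _ => ∏ t ∈ F,
        (C.fiber (α (η t)) : Set B).indicator (fun b => ENNReal.ofReal (C.weight b)) (η t)) ξ := by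
  classical
  rw [Set.indicator_apply]
  split_ifs with hξ
  · rw [Set.mem_ofPred_eq] at hξ
    exact Finset.prod_congr rfl fun t ht => by rw [hξ t ht]
  · rw [Set.mem_ofPred_eq] at hξ
    push Not at hξ
    obtain ⟨t, ht, hne⟩ := hξ
    exact Finset.prod_eq_zero ht (Set.indicator_of_notMem (fun hη => hne (h.map_eq _ _ hη).symm) _)

lemma Refines.indicator_mul_mass (h : C.Refines α r r') (b : B) :
    (C.fiber (α b) : Set B).indicator (fun b => ENNReal.ofReal (C.weight b)) b * r {α b} =
      r' {b} := by
  by_cases hb : b ∈ C.fiber (α b)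
  · rw [Set.indicator_of_mem (Finset.mem_coe.2 hb), h.mass_eq _ _ hb]
  · rw [Set.indicator_of_notMem (mt Finset.mem_coe.1 hb), h.null _ hb, zero_mul]

variable [Zero A]

/-- Reveal the refined letters of `x.1` from the point `x.2` of the cube, and rescale that point
inside its box. -/
def step [Nonempty B] (C : CellSystem A B) (m : ℕ) (x : (ℤ → A) × (ℤ → ℝ)) :
    (ℤ → B) × (ℤ → ℝ) :=
  (C.relabel m x.1 x.2, C.rescale m x.1 x.2)

variable [MeasurableSingletonClass A] [IsProbabilityMeasure r]

lemma Refines.ae_isAdmissible (h : C.Refines α r r') (hr : r {0} ≠ 0) (m : ℕ) :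
    ∀ᵐ ξ ∂iid r, C.IsAdmissible m ξ := by
  filter_upwards [ae_cutsUnbounded hr m, ae_iid_of_ae h.ae_nonempty] with ξ cuts nonempty
  exact ⟨cuts, nonempty⟩

variable [Countable A] [Countable B] [MeasurableSingletonClass B]

lemma measurableSet_isHeavy (C : CellSystem A B) (m : ℕ) (t : ℤ) :
    MeasurableSet {x : (ℤ → A) × (ℤ → B) | C.IsHeavy m x.1 x.2 t} :=
  measurableSet_setOfPred.2 ((measurable_pi_apply t).comp (measurable_blockwise_words m
    fun {d} _ v _ => 1 / 2 / 4 ^ (d + 1) < ∏ i, C.weight (v i)))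

variable [Nonempty B]

lemma measurable_step (C : CellSystem A B) (m : ℕ) : Measurable (C.step m) :=
  (C.measurable_relabel m).prodMk (C.measurable_rescale m)

variable [IsProbabilityMeasure r']

lemma Refines.measurePreserving_step (h : C.Refines α r r') (hr : r {0} ≠ 0) (m : ℕ) :
    MeasurePreserving (C.step m) ((iid r).prod (iid unitMeasure))
      ((iid r').prod (iid unitMeasure)) := by
  have measurable := C.measurable_step m
  refine ⟨measurable, ext_of_letterCylinders_prod fun F η G S hS => ?_⟩
  have measurableSet_cylinder :
      MeasurableSet ({x : ℤ → B | ∀ t ∈ F, x t = η t} ×ˢ (G : Set ℤ).pi S) :=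
    (measurableSet_letterCylinder F η).prod (MeasurableSet.pi G.countable_toSet fun t _ => hS t)
  have fiberwise : ∀ᵐ ξ ∂iid r, iid unitMeasure (Prod.mk ξ ⁻¹' (C.step m ⁻¹'
        ({x : ℤ → B | ∀ t ∈ F, x t = η t} ×ˢ (G : Set ℤ).pi S))) =
      {ξ | ∀ t ∈ F, ξ t = α (η t)}.indicator (fun _ => ∏ t ∈ F,
        (C.fiber (α (η t)) : Set B).indicator (fun b => ENNReal.ofReal (C.weight b)) (η t)) ξ *
          ∏ t ∈ G, unitMeasure (S t) := by
    filter_upwards [h.ae_isAdmissible hr m] with ξ hξ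
    rw [← h.prod_indicator_fiber, ← hξ.measure_relabel_cylinder F G η hS]
    rfl
  rw [Measure.map_apply measurable measurableSet_cylinder,
    Measure.prod_apply (measurable measurableSet_cylinder), lintegral_congr_ae fiberwise,
    lintegral_mul_const' _ _ (ENNReal.prod_ne_top fun t _ => measure_ne_top _ _),
    lintegral_indicator_const (measurableSet_letterCylinder F fun t => α (η t)),
    iid_letterCylinder, ← Finset.prod_mul_distrib, Measure.prod_prod, iid_letterCylinder,
    iid, Measure.infinitePi_pi _ fun t _ => hS t]
  simp only [h.indicator_mul_mass]

lemma Refines.measure_sideAt_le (h : C.Refines α r r') (hr : r {0} ≠ 0) (m : ℕ) (t : ℤ) :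
    ((iid r).prod (iid unitMeasure)) {x | 3 / 4 < C.sideAt m x.1 (C.relabel m x.1 x.2) t} ≤
      2 * iid r' {η | C.IsHeavy m (fun s => α (η s)) η t} := by
  have measurable_pair := measurable_fst.prodMk (C.measurable_relabel m)
  have measurableSet_long : MeasurableSet {x : (ℤ → A) × (ℤ → ℝ) |
      3 / 4 < C.sideAt m x.1 (C.relabel m x.1 x.2) t} :=
    measurableSet_lt measurable_const
      ((measurable_pi_apply t).comp ((C.measurable_sideAt m).comp measurable_pair))
  have measurableSet_heavy : MeasurableSet {x : (ℤ → A) × (ℤ → ℝ) |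
      C.IsHeavy m x.1 (C.relabel m x.1 x.2) t} :=
    measurable_pair (C.measurableSet_isHeavy m t)
  have measurable_coarsen : Measurable fun (η : ℤ → B) (s : ℤ) => α (η s) :=
    measurable_pi_lambda _ fun s => (measurable_of_countable α).comp (measurable_pi_apply s)
  have measurableSet_heavy' : MeasurableSet {η | C.IsHeavy m (fun s => α (η s)) η t} :=
    (measurable_coarsen.prodMk measurable_id) (C.measurableSet_isHeavy m t)
  have coarsen_relabel : ∀ᵐ x ∂(iid r).prod (iid unitMeasure),
      (fun s => α (C.relabel m x.1 x.2 s)) = x.1 := by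
    filter_upwards [Measure.quasiMeasurePreserving_fst.ae (h.ae_isAdmissible hr m),
      Measure.quasiMeasurePreserving_snd.ae ae_iid_unitMeasure_mem_Ico] with x hξ hz
    exact funext fun s => h.map_eq _ _ (hξ.relabel_spec hz s).1
  have heavy_measure : iid r' {η | C.IsHeavy m (fun s => α (η s)) η t} =
      ((iid r).prod (iid unitMeasure)) {x | C.IsHeavy m x.1 (C.relabel m x.1 x.2) t} := by
    rw [← (measurePreserving_fst.comp (h.measurePreserving_step hr m)).measure_preimage
      measurableSet_heavy'.nullMeasurableSet]
    refine measure_congr (eventuallyEq_set.2 ?_)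
    filter_upwards [coarsen_relabel] with x hx
    simp only [Set.mem_preimage, Function.comp_apply, step, Set.mem_ofPred_eq, hx]
  rw [heavy_measure, Measure.prod_apply measurableSet_long, Measure.prod_apply measurableSet_heavy,
    ← lintegral_const_mul' _ _ (by finiteness)]
  refine lintegral_mono_ae ?_
  filter_upwards [h.ae_isAdmissible hr m] with ξ hξ
  exact hξ.measure_sideAt_le t

end Refines

end CellSystem

/-! ### Heavy blocks are rare -/

lemma ae_eventually_mul_le_sum {A : Type*} [MeasurableSpace A] {r : Measure A}
    [IsProbabilityMeasure r] {f : A → ℝ} (hf : Measurable f) (hint : Integrable f r) {a : ℝ}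
    (ha : a < ∫ b, f b ∂r) {e : ℕ → ℤ} (he : Function.Injective e) :
    ∀ᵐ η ∂iid r, ∀ᶠ N : ℕ in atTop, a * N ≤ ∑ i ∈ Finset.range N, f (η (e i)) := by
  have eval (t : ℤ) : MeasurePreserving (fun η : ℤ → A => η t) (iid r) r :=
    measurePreserving_eval_infinitePi (fun _ : ℤ => r) t
  have identDistrib (t : ℤ) : ProbabilityTheory.IdentDistrib (fun η => f (η t)) f (iid r) r :=
    ⟨(hf.comp (eval t).measurable).aemeasurable, hf.aemeasurable, by
      conv_rhs => rw [← (eval t).map_eq, Measure.map_map hf (eval t).measurable]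
      rfl⟩
  have strong_law := ProbabilityTheory.strong_law_ae_real (fun i (η : ℤ → A) => f (η (e i)))
    ((identDistrib (e 0)).integrable_iff.2 hint)
    (fun i j hij => (ProbabilityTheory.iIndepFun_infinitePi (P := fun _ : ℤ => r)
      (X := fun _ => f) fun _ => hf).indepFun (he.ne hij))
    fun i => (identDistrib (e i)).trans (identDistrib (e 0)).symm
  rw [(identDistrib (e 0)).integral_eq] at strong_law
  filter_upwards [strong_law] with η hη
  filter_upwards [hη.eventually (lt_mem_nhds ha), eventually_gt_atTop 0] with N hN hpos
  exact ((lt_div_iff₀ (Nat.cast_pos.2 hpos)).1 hN).le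

lemma tendsto_measure_not_forall_ge {Ω : Type*} [MeasurableSpace Ω] {μ : Measure Ω}
    [IsFiniteMeasure μ] {Q : ℕ → Ω → Prop} (hQ : ∀ N, MeasurableSet {ω | Q N ω})
    (h : ∀ᵐ ω ∂μ, ∀ᶠ N in atTop, Q N ω) :
    Tendsto (fun N₀ => μ {ω | ¬ ∀ N ≥ N₀, Q N ω}) atTop (nhds 0) := by
  have measurableSet_tail (N₀ : ℕ) : MeasurableSet {ω | ∀ N ≥ N₀, Q N ω} := by
    simp only [Set.ofPred_forall]
    exact MeasurableSet.iInter fun N => MeasurableSet.iInter fun _ => hQ N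
  have limit := tendsto_measure_iInter_atTop (μ := μ) (s := fun N₀ => {ω | ¬ ∀ N ≥ N₀, Q N ω})
    (fun N₀ => (measurableSet_tail N₀).compl.nullMeasurableSet)
    (fun _ _ hle _ hω htail => hω fun N hN => htail N (hle.trans hN)) ⟨0, measure_ne_top _ _⟩
  have null : μ (⋂ N₀, {ω | ¬ ∀ N ≥ N₀, Q N ω}) = 0 := by
    rw [← Set.ofPred_forall, ← ae_iff.1 h]
    simp only [eventually_atTop, not_exists]
  rwa [null] at limit

lemma isCut_comp_iff {A B : Type*} [Zero A] [Zero B] {α : B → A} (hα : ∀ b, α b = 0 ↔ b = 0)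
    {m : ℕ} {η : ℤ → B} {c : ℤ} : IsCut m (fun s => α (η s)) c ↔ IsCut m η c := by
  simp only [IsCut, hα]

lemma sum_window {B M : Type*} [AddCommMonoid M] (f : B → M) (η : ℤ → B) (t : ℤ) (k l : ℕ) :
    ∑ i, f (window η (t - k) (k + l) i) =
      ∑ i ∈ Finset.range k, f (η (t - 1 - (i : ℕ))) +
        ∑ i ∈ Finset.range (l + 1), f (η (t + (i : ℕ))) := by
  have sum_range := Fin.sum_univ_eq_sum_range (fun i => f (η (t - k + (i : ℕ)))) (k + (l + 1))
  refine sum_range.trans ?_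
  rw [Finset.sum_range_add, ← Finset.sum_range_reflect]
  congr 1
  · refine Finset.sum_congr rfl fun i hi => ?_
    rw [Finset.mem_range] at hi
    congr 2
    omega
  · refine Finset.sum_congr rfl fun i _ => ?_
    congr 2
    push_cast
    ring

lemma two_mul_four_pow_le_exp {L : ℕ} (hL : L ≠ 0) : (2 * 4 ^ L : ℝ) ≤ Real.exp (3 * L) := by
  have eight_le : (8 : ℝ) ≤ Real.exp 3 := by
    calc (8 : ℝ) = (1 + 1) ^ 3 := by norm_num
      _ ≤ Real.exp 1 ^ 3 := by gcongr; exact Real.add_one_le_exp 1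
      _ = Real.exp 3 := by rw [← Real.exp_nat_mul]; norm_num
  calc (2 * 4 ^ L : ℝ) ≤ 2 ^ L * 4 ^ L := by gcongr; exact le_self_pow₀ (by norm_num) hL
    _ = 8 ^ L := by rw [← mul_pow]; norm_num
    _ ≤ Real.exp 3 ^ L := by gcongr
    _ = Real.exp (3 * L) := by rw [← Real.exp_nat_mul, mul_comm]

namespace CellSystem

variable {A B : Type*}

/-- The conditional information of the `N` letters of `η` on either side of `t` is at least `3 N`.
The constant is chosen so that `2 * 4 ^ N ≤ exp (3 * N)`. -/
def IsInformative (C : CellSystem A B) (t : ℤ) (N : ℕ) (η : ℤ → B) : Prop :=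
  3 * (N : ℝ) ≤ ∑ i ∈ Finset.range N, -Real.log (C.weight (η (t - 1 - (i : ℕ)))) ∧
    3 * (N : ℝ) ≤ ∑ i ∈ Finset.range N, -Real.log (C.weight (η (t + (i : ℕ))))

lemma not_isHeavy [Zero A] {C : CellSystem A B} {m : ℕ} {ξ : ℤ → A} {η : ℤ → B} {t : ℤ}
    (hpos : ∀ s, 0 < C.weight (η s)) (hback : C.IsInformative t (back m ξ t) η)
    (hahead : C.IsInformative t (ahead m ξ t + 1) η) : ¬ C.IsHeavy m ξ η t := by
  have info_ge := add_le_add hback.1 hahead.2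
  rw [← sum_window fun b => -Real.log (C.weight b), ← mul_add, ← Nat.cast_add,
    ← add_assoc] at info_ge
  rw [IsHeavy, not_lt]
  generalize back m ξ t = k at info_ge ⊢
  generalize ahead m ξ t = l at info_ge ⊢
  calc ∏ i, C.weight (window η (t - k) (k + l) i)
      = Real.exp (-∑ i, -Real.log (C.weight (window η (t - k) (k + l) i))) := by
        rw [Finset.sum_neg_distrib, neg_neg, Real.exp_sum]
        exact Finset.prod_congr rfl fun i _ => (Real.exp_log (hpos _)).symm
    _ ≤ (Real.exp (3 * (k + l + 1 : ℕ)))⁻¹ := by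
        rw [← Real.exp_neg]
        gcongr
    _ ≤ (2 * 4 ^ (k + l + 1))⁻¹ := by
        gcongr
        exact two_mul_four_pow_le_exp (Nat.succ_ne_zero _)
    _ = 1 / 2 / 4 ^ (k + l + 1) := by rw [div_div, one_div]

section RareHeavy

variable [MeasurableSpace B] [Countable B] {C : CellSystem A B} {r' : Measure B}
  [IsProbabilityMeasure r']

lemma Refines.ae_weight_pos [MeasurableSpace A] {α : B → A} {r : Measure A} (h : C.Refines α r r') :
    ∀ᵐ η ∂iid r', ∀ s, 0 < C.weight (η s) := by
  refine ae_iid_of_ae (P := fun b => 0 < C.weight b) (ae_iff_of_countable.2 fun b hb => ?_)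
  exact C.weight_pos _ b (not_imp_comm.1 (h.null b) hb)

variable [MeasurableSingletonClass B]

lemma tendsto_measure_not_isInformative
    (hint : Integrable (fun b => -Real.log (C.weight b)) r')
    (hent : 3 < ∫ b, -Real.log (C.weight b) ∂r') (t : ℤ) :
    Tendsto (fun N₀ => iid r' {η | ¬ ∀ N ≥ N₀, C.IsInformative t N η}) atTop (nhds 0) := by
  have measurable_info : Measurable fun b => -Real.log (C.weight b) := measurable_of_countable _
  refine tendsto_measure_not_forall_ge (fun N => ?_) ?_
  · have measurable_sum (e : ℕ → ℤ) : Measurable fun η : ℤ → B =>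
        ∑ i ∈ Finset.range N, -Real.log (C.weight (η (e i))) :=
      Finset.measurable_sum _ fun i _ => measurable_info.comp (measurable_pi_apply (e i))
    exact (measurableSet_le measurable_const (measurable_sum _)).inter
      (measurableSet_le measurable_const (measurable_sum _))
  · have behind := ae_eventually_mul_le_sum measurable_info hint hent
      (e := fun i => t - 1 - (i : ℕ)) fun i j hij => by simpa using hij
    have beyond := ae_eventually_mul_le_sum measurable_info hint hent
      (e := fun i => t + (i : ℕ)) fun i j hij => by simpa using hij
    filter_upwards [behind, beyond] with η hbehind hbeyond
    exact hbehind.and hbeyond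

variable [MeasurableSpace A] [Zero A] [Zero B] {α : B → A} {r : Measure A}

lemma Refines.measure_isHeavy_le (h : C.Refines α r r') (hα : ∀ b, α b = 0 ↔ b = 0)
    (hr' : r' {0} ≠ 0) (m N₀ : ℕ) (t : ℤ) :
    iid r' {η | C.IsHeavy m (fun s => α (η s)) η t} ≤
      iid r' {η | ¬ ∀ N ≥ N₀, C.IsInformative t N η} +
        (Finset.Icc (t - N₀) (t + N₀)).card * r' {0} ^ m := by
  have heavy_subset : ∀ᵐ η ∂iid r', C.IsHeavy m (fun s => α (η s)) η t →
      η ∈ {η | ¬ ∀ N ≥ N₀, C.IsInformative t N η} ∪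
        ⋃ c ∈ Finset.Icc (t - N₀) (t + N₀), {η | IsCut m η c} := by
    filter_upwards [h.ae_weight_pos, ae_cutsUnbounded hr' m] with η hpos cuts heavy
    by_contra hnot
    simp only [Set.mem_union, Set.mem_iUnion, Set.mem_ofPred_eq, not_or, not_not, not_exists,
      Finset.mem_Icc] at hnot
    obtain ⟨informative, no_cut⟩ := hnot
    have cuts' : CutsUnbounded m fun s => α (η s) := by
      simpa only [CutsUnbounded, isCut_comp_iff hα] using cuts
    have block := cuts'.isBlock t
    have back_ge : N₀ ≤ back m (fun s => α (η s)) t := by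
      by_contra hlt
      exact no_cut _ (by omega) ((isCut_comp_iff hα).1 block.left)
    have ahead_ge : N₀ ≤ ahead m (fun s => α (η s)) t + 1 := by
      by_contra hlt
      exact no_cut _ (by omega) ((isCut_comp_iff hα).1 block.right)
    exact not_isHeavy hpos (informative _ back_ge) (informative _ ahead_ge) heavy
  refine (measure_mono_ae heavy_subset).trans ((measure_union_le _ _).trans ?_)
  gcongr
  refine (measure_biUnion_finset_le _ _).trans_eq ?_
  simp only [iid_isCut, Finset.sum_const, nsmul_eq_mul]

lemma Refines.tendsto_measure_isHeavy (h : C.Refines α r r') (hα : ∀ b, α b = 0 ↔ b = 0)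
    (hr' : r' {0} ≠ 0) (hr'_lt : r' {0} < 1)
    (hint : Integrable (fun b => -Real.log (C.weight b)) r')
    (hent : 3 < ∫ b, -Real.log (C.weight b) ∂r') (t : ℤ) :
    Tendsto (fun m => iid r' {η | C.IsHeavy m (fun s => α (η s)) η t}) atTop (nhds 0) := by
  refine ENNReal.tendsto_nhds_zero.2 fun δ hδ => ?_
  obtain ⟨N₀, hN₀⟩ := ((tendsto_measure_not_isInformative hint hent t).eventually
    (ge_mem_nhds (ENNReal.half_pos hδ.ne'))).exists
  have cut_near := ENNReal.Tendsto.const_mul (tendsto_pow_atTop_nhds_zero_of_lt_one hr'_lt)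
    (Or.inr (ENNReal.natCast_ne_top (Finset.Icc (t - N₀) (t + N₀)).card))
  rw [mul_zero] at cut_near
  filter_upwards [cut_near.eventually (ge_mem_nhds (ENNReal.half_pos hδ.ne'))] with m hm
  calc _ ≤ _ := h.measure_isHeavy_le hα hr' m N₀ t
    _ ≤ δ / 2 + δ / 2 := add_le_add hN₀ hm
    _ = δ := ENNReal.add_halves δ

end RareHeavy

end CellSystem

/-! ### Truncated letters and their refinements -/

/-- The law of the letter `b` truncated to `min b n`, where `b` has law `ρ`. -/
def trunc (ρ : Measure ℕ) (n : ℕ) : Measure ℕ := ρ.map fun b => min b n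

section trunc

variable {ρ : Measure ℕ} {n n' b : ℕ}

instance [IsProbabilityMeasure ρ] : IsProbabilityMeasure (trunc ρ n) :=
  Measure.isProbabilityMeasure_map (measurable_of_countable _).aemeasurable

lemma trunc_apply (ρ : Measure ℕ) (n : ℕ) (S : Set ℕ) :
    trunc ρ n S = ρ ((fun b => min b n) ⁻¹' S) :=
  Measure.map_apply (measurable_of_countable _) MeasurableSet.of_discrete

lemma trunc_real (ρ : Measure ℕ) (n : ℕ) (S : Set ℕ) :
    (trunc ρ n).real S = ρ.real ((fun b => min b n) ⁻¹' S) := by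
  rw [measureReal_def, trunc_apply, measureReal_def]

lemma trunc_singleton_of_lt (h : b < n) : trunc ρ n {b} = ρ {b} := by
  rw [trunc_apply]
  congr 1
  ext x
  simp only [Set.mem_preimage, Set.mem_singleton_iff]
  omega

lemma trunc_singleton_of_gt (h : n < b) : trunc ρ n {b} = 0 := by
  have preimage_empty : (fun b => min b n) ⁻¹' {b} = ∅ :=
    Set.eq_empty_of_forall_notMem fun x hx => by
      simp only [Set.mem_preimage, Set.mem_singleton_iff] at hx
      omega
  rw [trunc_apply, preimage_empty, measure_empty]

lemma ae_trunc_le (ρ : Measure ℕ) (n : ℕ) : ∀ᵐ b ∂trunc ρ n, b ≤ n :=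
  ae_iff_of_countable.2 fun _ hb => not_lt.1 (mt trunc_singleton_of_gt hb)

variable [IsProbabilityMeasure ρ]

lemma trunc_real_pos (hρ : ∀ b, 0 < ρ.real {b}) (h : b ≤ n) : 0 < (trunc ρ n).real {b} := by
  rw [trunc_real]
  exact (hρ b).trans_le (measureReal_mono (Set.singleton_subset_iff.2 (min_eq_left h)))

lemma trunc_singleton_zero_ne_zero (hρ : ∀ b, 0 < ρ.real {b}) (n : ℕ) : trunc ρ n {0} ≠ 0 :=
  (ENNReal.toReal_pos_iff.1 (trunc_real_pos hρ (Nat.zero_le n))).1.ne'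

lemma trunc_singleton_zero_lt_one (hρ : ∀ b, 0 < ρ.real {b}) (hn : 0 < n) :
    trunc ρ n {0} < 1 := by
  have one_pos := (ENNReal.toReal_pos_iff.1 (trunc_real_pos hρ (Nat.succ_le_of_lt hn))).1
  calc trunc ρ n {0} < trunc ρ n {0} + trunc ρ n {1} :=
        ENNReal.lt_add_right (measure_ne_top _ _) one_pos.ne'
    _ = trunc ρ n ({0} ∪ {1}) := (measure_union (by simp) (measurableSet_singleton _)).symm
    _ ≤ 1 := prob_le_one

lemma trunc_real_eq_sum (h : n ≤ n') (a : ℕ) :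
    (trunc ρ n).real {a} =
      ∑ b ∈ Finset.range (n' + 1) with min b n = a, (trunc ρ n').real {b} := by
  rw [sum_measureReal_singleton, trunc_real, trunc_real]
  congr 1
  ext x
  simp only [Set.mem_preimage, Set.mem_singleton_iff, Finset.coe_filter, Finset.mem_range,
    Set.mem_ofPred_eq]
  omega

lemma trunc_real_le (h : n ≤ n') (hb : b ≤ n') :
    (trunc ρ n').real {b} ≤ (trunc ρ n).real {min b n} := by
  rw [trunc_real_eq_sum h]
  exact Finset.single_le_sum (f := fun b => (trunc ρ n').real {b}) (fun _ _ => measureReal_nonneg)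
    (Finset.mem_filter.2 ⟨Finset.mem_range.2 (Nat.lt_succ_of_le hb), rfl⟩)

lemma integrable_trunc (f : ℕ → ℝ) : Integrable f (trunc ρ n) := by
  have integrableOn := IntegrableOn.finset (μ := trunc ρ n) (s := Finset.range (n + 1)) (f := f)
  rwa [IntegrableOn, Measure.restrict_eq_self_of_ae_mem] at integrableOn
  filter_upwards [ae_trunc_le ρ n] with b hb
  exact Finset.mem_coe.2 (Finset.mem_range.2 (Nat.lt_succ_of_le hb))

lemma exists_refines_trunc (hρ : ∀ b, 0 < ρ.real {b}) (h : n ≤ n') :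
    ∃ C : CellSystem ℕ ℕ, C.Refines (fun b => min b n) (trunc ρ n) (trunc ρ n') ∧
      (∀ a b, b ∈ C.fiber a ↔ b ≤ n' ∧ min b n = a) ∧
      ∀ b, C.weight b = (trunc ρ n').real {b} / (trunc ρ n).real {min b n} := by
  have coarse_pos (b : ℕ) : 0 < (trunc ρ n).real {min b n} := trunc_real_pos hρ (min_le_right b n)
  have mem_filter (a b : ℕ) :
      b ∈ {b ∈ Finset.range (n' + 1) | min b n = a} ↔ b ≤ n' ∧ min b n = a := by
    rw [Finset.mem_filter, Finset.mem_range, Nat.lt_succ_iff]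
  obtain ⟨C, fiber_eq, weight_eq⟩ := CellSystem.exists_fiber_eq
    (fun a => {b ∈ Finset.range (n' + 1) | min b n = a})
    (fun b => (trunc ρ n').real {b} / (trunc ρ n).real {min b n})
    (fun a b hb => div_pos (trunc_real_pos hρ ((mem_filter a b).1 hb).1) (coarse_pos b))
    (fun a ⟨b, hb⟩ => by
      obtain ⟨-, rfl⟩ := (mem_filter a b).1 hb
      rw [Finset.sum_congr rfl fun c hc => by rw [(Finset.mem_filter.1 hc).2],
        ← Finset.sum_div, ← trunc_real_eq_sum h, div_self (coarse_pos b).ne'])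
  have mem_fiber (a b : ℕ) : b ∈ C.fiber a ↔ b ≤ n' ∧ min b n = a := by
    rw [fiber_eq, mem_filter]
  refine ⟨C, ⟨fun a b hb => ((mem_fiber a b).1 hb).2, fun a b hb => ?_, fun b hb => ?_, ?_⟩,
    mem_fiber, fun b => by rw [weight_eq]⟩
  · obtain ⟨-, rfl⟩ := (mem_fiber a b).1 hb
    rw [weight_eq, ← ofReal_measureReal (s := {min b n}), ← ENNReal.ofReal_mul (by positivity),
      div_mul_cancel₀ _ (coarse_pos b).ne', ofReal_measureReal]
  · exact trunc_singleton_of_gt (not_le.1 fun hle => hb ((mem_fiber _ b).2 ⟨hle, rfl⟩))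
  · filter_upwards [ae_trunc_le ρ n] with a ha
    exact ⟨a, (mem_fiber a a).2 ⟨ha.trans h, min_eq_left ha⟩⟩

lemma sum_negMulLog_add_log_le_integral (hρ : ∀ b, 0 < ρ.real {b}) (h : n ≤ n') :
    ∑ b ∈ Finset.Ico n n', Real.negMulLog (ρ.real {b}) + Real.log ((trunc ρ n).real {n}) ≤
      ∫ b, -Real.log ((trunc ρ n').real {b} / (trunc ρ n).real {min b n}) ∂trunc ρ n' := by
  have tail_pos : 0 < (trunc ρ n).real {n} := trunc_real_pos hρ le_rfl
  have log_tail_nonpos := Real.log_nonpos tail_pos.le measureReal_le_one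
  have term_eq : ∀ b ∈ Finset.Ico n n', (trunc ρ n').real {b} •
      -Real.log ((trunc ρ n').real {b} / (trunc ρ n).real {min b n}) =
      Real.negMulLog (ρ.real {b}) + ρ.real {b} * Real.log ((trunc ρ n).real {n}) := fun b hb => by
    rw [Finset.mem_Ico] at hb
    rw [measureReal_def (trunc ρ n'), trunc_singleton_of_lt hb.2, min_eq_right hb.1,
      ← measureReal_def, Real.log_div (hρ b).ne' tail_pos.ne', smul_eq_mul, Real.negMulLog]
    ring
  calc _ ≤ ∑ b ∈ Finset.Ico n n', Real.negMulLog (ρ.real {b}) +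
        ρ.real (Finset.Ico n n' : Finset ℕ) * Real.log ((trunc ρ n).real {n}) := by
        gcongr
        exact le_mul_of_le_one_left log_tail_nonpos measureReal_le_one
    _ = ∫ b in (Finset.Ico n n' : Finset ℕ),
        -Real.log ((trunc ρ n').real {b} / (trunc ρ n).real {min b n}) ∂trunc ρ n' := by
        rw [setIntegral_finset _ IntegrableOn.finset, Finset.sum_congr rfl term_eq,
          Finset.sum_add_distrib, ← Finset.sum_mul, sum_measureReal_singleton]
    _ ≤ _ := by
        refine setIntegral_le_integral (integrable_trunc _) ?_
        filter_upwards [ae_trunc_le ρ n'] with b hb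
        exact neg_nonneg.2 (Real.log_nonpos (by positivity)
          (div_le_one_of_le₀ (trunc_real_le h hb) measureReal_nonneg))

lemma exists_lt_integral_trunc (hρ : ∀ b, 0 < ρ.real {b})
    (hent : ∑' b, ENNReal.ofReal (Real.negMulLog (ρ.real {b})) = ⊤) (n : ℕ) (M : ℝ) :
    ∃ n', n < n' ∧ M < ∫ b, -Real.log
      ((trunc ρ n').real {b} / (trunc ρ n).real {min b n}) ∂trunc ρ n' := by
  have diverges := (not_summable_iff_tendsto_nat_atTop_of_nonneg fun b =>
    Real.negMulLog_nonneg (hρ b).le measureReal_le_one).1 fun hs => hs.tsum_ofReal_ne_top hent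
  obtain ⟨n', hn', large⟩ := ((eventually_gt_atTop n).and (diverges.eventually_gt_atTop
    (M - Real.log ((trunc ρ n).real {n}) +
      ∑ b ∈ Finset.range n, Real.negMulLog (ρ.real {b})))).exists
  have bound := sum_negMulLog_add_log_le_integral hρ hn'.le
  rw [Finset.sum_Ico_eq_sub _ hn'.le] at bound
  exact ⟨n', hn', by linarith⟩

end trunc

/-- The data refining letters truncated at `n` to letters truncated at `n'`: a cell system and a
number of zeros marking the cuts, for which heavy words are rare at the coordinates `t` with
`|t| ≤ k`. Nothing is required of the first stage, `n = 0`, where all the letters are zero. -/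
structure Stage (ρ : Measure ℕ) (n n' k : ℕ) where
  cells : CellSystem ℕ ℕ
  cutLen : ℕ
  refines : cells.Refines (fun b => min b n) (trunc ρ n) (trunc ρ n')
  mem_fiber : ∀ a b, b ∈ cells.fiber a ↔ b ≤ n' ∧ min b n = a
  measure_isHeavy_le : 1 ≤ n → ∀ t ∈ Finset.Icc (-(k : ℤ)) k,
    iid (trunc ρ n') {η | cells.IsHeavy cutLen (fun s => min (η s) n) η t} ≤ 2⁻¹ ^ k

lemma exists_stage {ρ : Measure ℕ} [IsProbabilityMeasure ρ] (hρ : ∀ b, 0 < ρ.real {b})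
    (hent : ∑' b, ENNReal.ofReal (Real.negMulLog (ρ.real {b})) = ⊤) (n k : ℕ) :
    ∃ n', n < n' ∧ Nonempty (Stage ρ n n' k) := by
  obtain ⟨n', hn', large⟩ := exists_lt_integral_trunc hρ hent n 3
  obtain ⟨C, refines, mem_fiber, weight_eq⟩ := exists_refines_trunc hρ hn'.le
  simp only [← weight_eq] at large
  refine ⟨n', hn', ?_⟩
  rcases Nat.eq_zero_or_pos n with rfl | hn
  · exact ⟨⟨C, 0, refines, mem_fiber, fun h => absurd h (by decide)⟩⟩
  · have tolerance_pos : (0 : ℝ≥0∞) < 2⁻¹ ^ k :=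
      ENNReal.pow_pos (ENNReal.inv_pos.2 ENNReal.ofNat_ne_top) k
    obtain ⟨m, hm⟩ := ((eventually_all_finset (Finset.Icc (-(k : ℤ)) k)).2 fun t _ =>
      (refines.tendsto_measure_isHeavy (fun b => by omega) (trunc_singleton_zero_ne_zero hρ n')
        (trunc_singleton_zero_lt_one hρ (hn.trans hn')) (integrable_trunc _) large
        t).eventually_le_const tolerance_pos).exists
    exact ⟨⟨C, m, refines, mem_fiber, fun _ => hm⟩⟩

/-! ### Stability of one step under perturbations -/

section Stability

variable {X : Type*} {l : Filter X}

lemma eventually_window_eq {β : Type*} {Y : X → ℤ → β} {y : ℤ → β}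
    (h : ∀ t, ∀ᶠ x in l, Y x t = y t) (c : ℤ) (d : ℕ) :
    ∀ᶠ x in l, window (Y x) c d = window y c d :=
  (eventually_all.2 fun i : Fin (d + 1) => h (c + (i : ℕ))).mono fun _ => funext

variable {A B : Type*} [Zero A] {Ξ : X → ℤ → A} {ξ : ℤ → A} {m d : ℕ} {c : ℤ}

lemma IsBlock.eventually (block : IsBlock m ξ c d) (h : ∀ t, ∀ᶠ x in l, Ξ x t = ξ t) :
    ∀ᶠ x in l, IsBlock m (Ξ x) c d :=
  (eventually_all.2 fun i : Fin (d + 1 + m) => h (c + (i : ℕ))).mono fun _ hx =>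
    block.congr fun i hi => hx ⟨i, hi⟩

namespace CellSystem

variable {C : CellSystem A B}

lemma eventually_lowerAt_sideAt_eq {H : X → ℤ → B} {η : ℤ → B} (cuts : CutsUnbounded m ξ)
    (hΞ : ∀ t, ∀ᶠ x in l, Ξ x t = ξ t) (hH : ∀ t, ∀ᶠ x in l, H x t = η t) (t : ℤ) :
    ∀ᶠ x in l, C.lowerAt m (Ξ x) (H x) t = C.lowerAt m ξ η t ∧
      C.sideAt m (Ξ x) (H x) t = C.sideAt m ξ η t := by
  revert t
  refine cuts.forall_of_isBlock fun c d block i => ?_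
  filter_upwards [block.eventually hΞ, eventually_window_eq hΞ c d, eventually_window_eq hH c d]
    with x block' hξ hη
  simp only [lowerAt, sideAt, block.blockwise_apply, block'.blockwise_apply, hξ, hη, and_self]

variable [Nonempty B] {Z : X → ℤ → ℝ} {z : ℤ → ℝ}

lemma IsAdmissible.sideAt_relabel_pos (h : C.IsAdmissible m ξ)
    (hz : ∀ t, z t ∈ Set.Ico (0 : ℝ) 1) (t : ℤ) : 0 < C.sideAt m ξ (C.relabel m ξ z) t := by
  have mem := (h.relabel_spec hz t).2
  linarith [mem.1, mem.2]

lemma IsAdmissible.sideAt_relabel_le_one (h : C.IsAdmissible m ξ)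
    (hz : ∀ t, z t ∈ Set.Ico (0 : ℝ) 1) (t : ℤ) : C.sideAt m ξ (C.relabel m ξ z) t ≤ 1 := by
  have block := h.cuts.isBlock t
  have bounds := side_bounds (C := C) h.cuts block.left block.right
    (fun s _ => (h.relabel_spec hz s).1) (t := t) (by rw [Finset.mem_Ico]; omega)
  linarith [bounds.1, bounds.2.2]

lemma IsAdmissible.lowerAt_lt (h : C.IsAdmissible m ξ) (hz : ∀ t, z t ∈ Set.Ico (0 : ℝ) 1)
    {t : ℤ} (hpos : 0 < C.rescale m ξ z t) : C.lowerAt m ξ (C.relabel m ξ z) t < z t := by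
  rwa [rescale, div_pos_iff_of_pos_right (h.sideAt_relabel_pos hz t), sub_pos] at hpos

/-- A point in the interior of its box stays in the box when it is perturbed. -/
lemma IsAdmissible.eventually_relabel_eq (h : C.IsAdmissible m ξ)
    (hz : ∀ t, z t ∈ Set.Ico (0 : ℝ) 1) (hpos : ∀ t, 0 < C.rescale m ξ z t)
    (hΞ : ∀ t, ∀ᶠ x in l, Ξ x t = ξ t) (hZ : ∀ t, Tendsto (fun x => Z x t) l (nhds (z t)))
    (t : ℤ) : ∀ᶠ x in l, C.relabel m (Ξ x) (Z x) t = C.relabel m ξ z t := by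
  revert t
  refine h.cuts.forall_of_isBlock fun c d block i => ?_
  have coordinate_mem (j : Fin (d + 1)) : ∀ᶠ x in l, Z x (c + (j : ℕ)) ∈
      Set.Ico (C.lowerAt m ξ (C.relabel m ξ z) (c + (j : ℕ)))
        (C.lowerAt m ξ (C.relabel m ξ z) (c + (j : ℕ)) +
          C.sideAt m ξ (C.relabel m ξ z) (c + (j : ℕ))) := by
    filter_upwards [(hZ (c + (j : ℕ))).eventually
      (Ioo_mem_nhds (h.lowerAt_lt hz (hpos _)) (h.relabel_spec hz _).2.2)] with x hx
    exact Set.Ioo_subset_Ico_self hx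
  simp only [lowerAt, sideAt, block.blockwise_apply] at coordinate_mem
  filter_upwards [block.eventually hΞ, eventually_window_eq hΞ c d,
    eventually_all.2 coordinate_mem] with x block' hξ mem_box
  have mem_words : window (C.relabel m ξ z) c d ∈ C.words (window ξ c d) :=
    mem_words.2 fun j => (h.relabel_spec hz _).1
  rw [relabel, block'.blockwise_apply, hξ, label_eq mem_words (u := window (Z x) c d) mem_box]
  rfl

lemma IsAdmissible.tendsto_rescale (h : C.IsAdmissible m ξ)
    (hz : ∀ t, z t ∈ Set.Ico (0 : ℝ) 1) (hpos : ∀ t, 0 < C.rescale m ξ z t)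
    (hΞ : ∀ t, ∀ᶠ x in l, Ξ x t = ξ t) (hZ : ∀ t, Tendsto (fun x => Z x t) l (nhds (z t)))
    (t : ℤ) : Tendsto (fun x => C.rescale m (Ξ x) (Z x) t) l (nhds (C.rescale m ξ z t)) := by
  refine (((hZ t).sub_const _).div_const _).congr' ?_
  filter_upwards [eventually_lowerAt_sideAt_eq (C := C) h.cuts hΞ
    (h.eventually_relabel_eq hz hpos hΞ hZ) t] with x hx
  rw [rescale, hx.1, hx.2]

end CellSystem

end Stability

/-! ### The tower of refinements -/

/-- Truncation levels increasing to infinity from `0`, with a refinement between consecutive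
levels. -/
structure Tower (ρ : Measure ℕ) where
  level : ℕ → ℕ
  level_zero : level 0 = 0
  strictMono : StrictMono level
  stage : ∀ k, Stage ρ (level k) (level (k + 1)) k

lemma nonempty_tower {ρ : Measure ℕ} [IsProbabilityMeasure ρ] (hρ : ∀ b, 0 < ρ.real {b})
    (hent : ∑' b, ENNReal.ofReal (Real.negMulLog (ρ.real {b})) = ⊤) : Nonempty (Tower ρ) := by
  choose next lt_next stage using exists_stage hρ hent
  let level : ℕ → ℕ := fun k => Nat.rec 0 (fun k n => next n k) k
  exact ⟨⟨level, rfl, strictMono_nat_of_lt_succ fun k => lt_next (level k) k,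
    fun k => (stage (level k) k).some⟩⟩

namespace Tower

variable {ρ : Measure ℕ} (T : Tower ρ)

/-- The cell system of the `k`-th refinement. -/
abbrev cells (k : ℕ) : CellSystem ℕ ℕ := (T.stage k).cells

/-- The number of zeros marking the cuts of the `k`-th refinement. -/
abbrev cutLen (k : ℕ) : ℕ := (T.stage k).cutLen

/-- The letters truncated at level `k` and the rescaled coordinates, after `k` refinements. -/
def state : ℕ → (ℤ → ℝ) → (ℤ → ℕ) × (ℤ → ℝ)
  | 0, z => (0, z)
  | k + 1, z => (T.cells k).step (T.cutLen k) (state k z)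

/-- The letters truncated at level `k`. -/
abbrev letters (k : ℕ) (z : ℤ → ℝ) : ℤ → ℕ := (T.state k z).1

/-- The rescaled coordinates after `k` refinements. -/
abbrev coords (k : ℕ) (z : ℤ → ℝ) : ℤ → ℝ := (T.state k z).2

/-- The lower end of the side at the site `t` of the box of the `k`-th refinement. -/
def base (k : ℕ) (z : ℤ → ℝ) (t : ℤ) : ℝ :=
  (T.cells k).lowerAt (T.cutLen k) (T.letters k z) (T.letters (k + 1) z) t

/-- The length of the side at the site `t` of the box of the `k`-th refinement. -/
def width (k : ℕ) (z : ℤ → ℝ) (t : ℤ) : ℝ :=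
  (T.cells k).sideAt (T.cutLen k) (T.letters k z) (T.letters (k + 1) z) t

/-- The points of the cube at which the construction works: all the refinements are defined, no
rescaled coordinate is on the boundary of its box, infinitely many boxes are not long in any given
direction, and every letter is revealed at some level. -/
structure Good (z : ℤ → ℝ) : Prop where
  cuts : ∀ k, CutsUnbounded (T.cutLen k) (T.letters k z)
  mem_Ioo : ∀ k t, T.coords k z t ∈ Set.Ioo (0 : ℝ) 1
  narrow : ∀ t K, ∃ j, K ≤ j ∧ T.width j z t ≤ 3 / 4
  stable : ∀ t, ∃ k, T.letters k z t < T.level k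

/-- The sequence of letters encoded by a point of the cube: a letter is known exactly as soon as
its truncation at level `k` is below that level. -/
def code (z : ℤ → ℝ) (t : ℤ) : ℕ :=
  T.letters (sInf {k | T.letters k z t < T.level k}) z t

lemma state_succ (k : ℕ) (z : ℤ → ℝ) :
    T.state (k + 1) z = (T.cells k).step (T.cutLen k) (T.state k z) :=
  rfl

lemma state_shift (k : ℕ) (z : ℤ → ℝ) :
    T.state k (shift z) = (shift (T.letters k z), shift (T.coords k z)) := by
  induction k with
  | zero => rfl
  | succ k ih =>
    rw [state_succ, ih, CellSystem.step, CellSystem.relabel_shift, CellSystem.rescale_shift]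
    rfl

lemma width_shift (k : ℕ) (z : ℤ → ℝ) (t : ℤ) : T.width k (shift z) t = T.width k z (t + 1) := by
  rw [width, letters, letters, state_shift, state_shift, CellSystem.sideAt_shift, shift, width]

lemma code_shift (z : ℤ → ℝ) : T.code (shift z) = shift (T.code z) := by
  funext t
  simp only [code, letters, state_shift, shift]

lemma good_iff (z : ℤ → ℝ) : T.Good z ↔ (∀ k, CutsUnbounded (T.cutLen k) (T.letters k z)) ∧
    (∀ k t, T.coords k z t ∈ Set.Ioo (0 : ℝ) 1) ∧ (∀ t K, ∃ j, K ≤ j ∧ T.width j z t ≤ 3 / 4) ∧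
    ∀ t, ∃ k, T.letters k z t < T.level k :=
  ⟨fun ⟨cuts, mem, narrow, stable⟩ => ⟨cuts, mem, narrow, stable⟩,
    fun ⟨cuts, mem, narrow, stable⟩ => ⟨cuts, mem, narrow, stable⟩⟩

lemma good_shift {z : ℤ → ℝ} : T.Good (shift z) ↔ T.Good z := by
  have forall_succ (P : ℤ → Prop) : (∀ t, P (t + 1)) ↔ ∀ t, P t :=
    (Equiv.addRight (1 : ℤ)).forall_congr_right
  simp only [good_iff, letters, coords, state_shift, cutsUnbounded_shift, width_shift]
  exact and_congr_right' (and_congr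
    (forall_congr' fun k => forall_succ fun t => T.coords k z t ∈ Set.Ioo (0 : ℝ) 1)
    (and_congr (forall_succ fun t => ∀ K, ∃ j, K ≤ j ∧ T.width j z t ≤ 3 / 4)
      (forall_succ fun t => ∃ k, T.letters k z t < T.level k)))

variable {T}

namespace Good

variable {z : ℤ → ℝ}

lemma mem_Ico (hz : T.Good z) (k : ℕ) (t : ℤ) : T.coords k z t ∈ Set.Ico (0 : ℝ) 1 :=
  Set.Ioo_subset_Ico_self (hz.mem_Ioo k t)

lemma isAdmissible_of_le (hz : T.Good z) {k : ℕ} (h : ∀ t, T.letters k z t ≤ T.level k) :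
    (T.cells k).IsAdmissible (T.cutLen k) (T.letters k z) where
  cuts := hz.cuts k
  fiber_nonempty t := ⟨T.letters k z t, ((T.stage k).mem_fiber _ _).2
    ⟨(h t).trans (T.strictMono k.lt_succ_self).le, min_eq_left (h t)⟩⟩

lemma letters_le (hz : T.Good z) (k : ℕ) (t : ℤ) : T.letters k z t ≤ T.level k := by
  induction k generalizing t with
  | zero => exact Nat.zero_le _
  | succ k ih =>
    exact (((T.stage k).mem_fiber _ _).1
      ((hz.isAdmissible_of_le ih).relabel_spec (hz.mem_Ico k) t).1).1

lemma isAdmissible (hz : T.Good z) (k : ℕ) :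
    (T.cells k).IsAdmissible (T.cutLen k) (T.letters k z) :=
  hz.isAdmissible_of_le (hz.letters_le k)

lemma min_letters_succ (hz : T.Good z) (k : ℕ) (t : ℤ) :
    min (T.letters (k + 1) z t) (T.level k) = T.letters k z t :=
  (((T.stage k).mem_fiber _ _).1 ((hz.isAdmissible k).relabel_spec (hz.mem_Ico k) t).1).2

lemma min_letters (hz : T.Good z) {j k : ℕ} (hjk : j ≤ k) (t : ℤ) :
    min (T.letters k z t) (T.level j) = T.letters j z t := by
  induction k, hjk using Nat.le_induction with
  | base => exact min_eq_left (hz.letters_le j t)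
  | succ k hjk ih =>
    rw [← ih, ← hz.min_letters_succ k t, min_assoc, min_eq_right (T.strictMono.monotone hjk)]

lemma letters_eq_min (hz : T.Good z) (k : ℕ) (t : ℤ) :
    T.letters k z t = min (T.code z t) (T.level k) := by
  set k₀ := sInf {k | T.letters k z t < T.level k} with hk₀
  have revealed : T.letters k₀ z t < T.level k₀ := Nat.sInf_mem (hz.stable t)
  rw [code, ← hk₀]
  rcases le_total k k₀ with h | h
  · exact (hz.min_letters h t).symm
  · have := hz.min_letters h t
    have := T.strictMono.monotone h
    omega

lemma code_eq_of_lt (hz : T.Good z) {k : ℕ} {t : ℤ} (h : T.letters k z t < T.level k) :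
    T.code z t = T.letters k z t := by
  have := hz.letters_eq_min k t
  omega

lemma eventually_state (hz : T.Good z) (k : ℕ) :
    (∀ t, ∀ᶠ x in nhds z, T.letters k x t = T.letters k z t) ∧
      ∀ t, Tendsto (fun x => T.coords k x t) (nhds z) (nhds (T.coords k z t)) := by
  induction k with
  | zero =>
    exact ⟨fun t => Eventually.of_forall fun x => rfl, fun t => (continuous_apply t).tendsto z⟩
  | succ k ih =>
    exact ⟨(hz.isAdmissible k).eventually_relabel_eq (hz.mem_Ico k)
        (fun t => (hz.mem_Ioo (k + 1) t).1) ih.1 ih.2,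
      (hz.isAdmissible k).tendsto_rescale (hz.mem_Ico k)
        (fun t => (hz.mem_Ioo (k + 1) t).1) ih.1 ih.2⟩

lemma width_pos (hz : T.Good z) (k : ℕ) (t : ℤ) : 0 < T.width k z t :=
  (hz.isAdmissible k).sideAt_relabel_pos (hz.mem_Ico k) t

lemma width_le_one (hz : T.Good z) (k : ℕ) (t : ℤ) : T.width k z t ≤ 1 :=
  (hz.isAdmissible k).sideAt_relabel_le_one (hz.mem_Ico k) t

lemma coords_eq (hz : T.Good z) (k : ℕ) (t : ℤ) :
    T.coords k z t = T.base k z t + T.width k z t * T.coords (k + 1) z t := by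
  have coords_succ : T.coords (k + 1) z t = (T.coords k z t - T.base k z t) / T.width k z t := rfl
  rw [coords_succ, mul_div_cancel₀ _ (hz.width_pos k t).ne', add_sub_cancel]

lemma exists_prod_width_le (hz : T.Good z) (t : ℤ) (M : ℕ) :
    ∃ K, ∏ j ∈ Finset.range K, T.width j z t ≤ (3 / 4) ^ M := by
  induction M with
  | zero => exact ⟨0, by simp⟩
  | succ M ih =>
    obtain ⟨K, hK⟩ := ih
    obtain ⟨j, hj, width_le⟩ := hz.narrow t K
    refine ⟨j + 1, ?_⟩
    rw [Finset.prod_range_succ, pow_succ]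
    refine mul_le_mul (hK.trans' ?_) width_le (hz.width_pos j t).le (by positivity)
    exact Finset.prod_le_prod_of_subset_of_le_one (Finset.range_mono hj)
      (fun i _ => (hz.width_pos i t).le) fun i _ _ => hz.width_le_one i t

end Good

lemma continuousOn_code : ContinuousOn T.code {z | T.Good z} := by
  refine fun z hz => tendsto_pi_nhds.2 fun t => ?_
  obtain ⟨k, revealed⟩ := hz.stable t
  refine tendsto_nhds_of_eventually_eq ?_
  filter_upwards [self_mem_nhdsWithin, nhdsWithin_le_nhds ((hz.eventually_state k).1 t)]
    with x hx letters_eq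
  rw [hz.code_eq_of_lt revealed, ← letters_eq]
  exact hx.code_eq_of_lt (letters_eq ▸ revealed)

section Recovery

variable {z : ℤ → ℝ} {l : Filter (ℤ → ℝ)}

/-- Boxes are determined by letters, so two points with the same letters lie in the same boxes. -/
lemma Good.eventually_abs_sub_eq (hz : T.Good z) (good : ∀ᶠ x in l, T.Good x)
    (code_eq : ∀ t, ∀ᶠ x in l, T.code x t = T.code z t) (t : ℤ) (K : ℕ) :
    ∀ᶠ x in l, |x t - z t| =
      (∏ j ∈ Finset.range K, T.width j z t) * |T.coords K x t - T.coords K z t| := by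
  have letters_eq (k : ℕ) (t : ℤ) : ∀ᶠ x in l, T.letters k x t = T.letters k z t := by
    filter_upwards [good, code_eq t] with x hx h
    rw [hx.letters_eq_min, hz.letters_eq_min, h]
  induction K with
  | zero =>
    refine Eventually.of_forall fun x => ?_
    rw [Finset.range_zero, Finset.prod_empty, one_mul]
    rfl
  | succ K ih =>
    filter_upwards [ih, good, CellSystem.eventually_lowerAt_sideAt_eq (C := T.cells K) (hz.cuts K)
      (letters_eq K) (letters_eq (K + 1)) t] with x abs_sub_eq hx box_eq
    have base_eq : T.base K x t = T.base K z t := box_eq.1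
    have width_eq : T.width K x t = T.width K z t := box_eq.2
    rw [abs_sub_eq, hx.coords_eq K t, hz.coords_eq K t, base_eq, width_eq,
      add_sub_add_left_eq_sub, ← mul_sub, abs_mul, abs_of_pos (hz.width_pos K t),
      Finset.prod_range_succ, mul_assoc]

lemma Good.le_nhds_of_tendsto_code (hz : T.Good z) (good : ∀ᶠ x in l, T.Good x)
    (hcode : Tendsto T.code l (nhds (T.code z))) : l ≤ nhds z := by
  have code_eq (t : ℤ) : ∀ᶠ x in l, T.code x t = T.code z t :=
    (tendsto_pi_nhds.1 hcode t).eventually ((isOpen_discrete {T.code z t}).mem_nhds rfl)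
  refine tendsto_id'.1 (tendsto_pi_nhds.2 fun t => Metric.tendsto_nhds.2 fun ε hε => ?_)
  obtain ⟨M, hM⟩ := exists_pow_lt_of_lt_one hε (show (3 / 4 : ℝ) < 1 by norm_num)
  obtain ⟨K, hK⟩ := hz.exists_prod_width_le t M
  filter_upwards [hz.eventually_abs_sub_eq good code_eq t K, good] with x abs_sub_eq hx
  have x_mem := hx.mem_Ioo K t
  have z_mem := hz.mem_Ioo K t
  have distance_le_one : |T.coords K x t - T.coords K z t| ≤ 1 :=
    abs_le.2 ⟨by linarith [x_mem.1, z_mem.2], by linarith [x_mem.2, z_mem.1]⟩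
  calc dist (x t) (z t) = _ := abs_sub_eq
    _ ≤ ∏ j ∈ Finset.range K, T.width j z t :=
      mul_le_of_le_one_right (Finset.prod_nonneg fun j _ => (hz.width_pos j t).le) distance_le_one
    _ < ε := hK.trans_lt hM

end Recovery

end Tower

/-! ### The law of the encoded sequence -/

lemma ae_frequently_of_tendsto_measure_not {Ω : Type*} [MeasurableSpace Ω] {μ : Measure Ω}
    {P : ℕ → Ω → Prop} (h : Tendsto (fun k => μ {ω | ¬P k ω}) atTop (nhds 0)) :
    ∀ᵐ ω ∂μ, ∃ᶠ k in atTop, P k ω := by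
  simp only [frequently_atTop]
  refine ae_all_iff.2 fun K => ?_
  rw [ae_iff, ← nonpos_iff_eq_zero]
  refine ge_of_tendsto h ?_
  filter_upwards [eventually_ge_atTop K] with k hk
  exact measure_mono fun ω never hP => never ⟨k, hk, hP⟩

lemma tendsto_measure_Ici {ρ : Measure ℕ} [IsFiniteMeasure ρ] {f : ℕ → ℕ} (hf : StrictMono f) :
    Tendsto (fun k => ρ (Set.Ici (f k))) atTop (nhds 0) := by
  have tendsto_iInter := tendsto_measure_iInter_atTop (μ := ρ) (s := fun k => Set.Ici (f k))
    (fun k => measurableSet_Ici.nullMeasurableSet)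
    (fun i j hij => Set.Ici_subset_Ici.2 (hf.monotone hij)) ⟨0, measure_ne_top _ _⟩
  have iInter_empty : ⋂ k, Set.Ici (f k) = ∅ := by
    ext b
    simp only [Set.mem_iInter, Set.mem_Ici, Set.mem_empty_iff_false, iff_false, not_forall, not_le]
    exact ⟨b + 1, (Nat.lt_succ_self b).trans_le hf.le_apply⟩
  rwa [iInter_empty, measure_empty] at tendsto_iInter

namespace Tower

variable {ρ : Measure ℕ} (T : Tower ρ)

lemma measurable_state (k : ℕ) : Measurable (T.state k) := by
  induction k with
  | zero => exact measurable_const.prodMk measurable_id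
  | succ k ih => exact ((T.cells k).measurable_step (T.cutLen k)).comp ih

lemma measurable_letters (k : ℕ) : Measurable (T.letters k) :=
  measurable_fst.comp (T.measurable_state k)

lemma measurable_coords (k : ℕ) : Measurable (T.coords k) :=
  measurable_snd.comp (T.measurable_state k)

lemma measurable_width (k : ℕ) : Measurable (T.width k) :=
  ((T.cells k).measurable_sideAt (T.cutLen k)).comp
    ((T.measurable_letters k).prodMk (T.measurable_letters (k + 1)))

lemma measurable_code : Measurable T.code := by
  refine measurable_pi_lambda _ fun t => ?_
  have measurable_letter (k : ℕ) : Measurable fun z => T.letters k z t :=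
    (measurable_pi_apply t).comp (T.measurable_letters k)
  have measurable_uncurried : Measurable fun y : ℕ × (ℤ → ℝ) => T.letters y.1 y.2 t :=
    measurable_from_prod_countable_right measurable_letter
  exact measurable_uncurried.comp
    ((measurable_nat_sInf fun k => measurable_letter k measurableSet_Iio).prodMk measurable_id)

lemma measurableSet_good : MeasurableSet {z | T.Good z} := by
  simp only [good_iff, Set.ofPred_and, Set.ofPred_forall, Set.ofPred_exists]
  refine .inter (.iInter fun k => ?_) (.inter (.iInter fun k => .iInter fun t => ?_)
    (.inter (.iInter fun t => .iInter fun K => .iUnion fun j => .inter (.const _) ?_)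
      (.iInter fun t => .iUnion fun k => ?_)))
  · exact T.measurable_letters k (measurableSet_cutsUnbounded _)
  · exact (measurable_pi_apply t).comp (T.measurable_coords k) measurableSet_Ioo
  · exact (measurable_pi_apply t).comp (T.measurable_width j) measurableSet_Iic
  · exact (measurable_pi_apply t).comp (T.measurable_letters k) measurableSet_Iio

variable [IsProbabilityMeasure ρ]

lemma measurePreserving_state (hρ : ∀ b, 0 < ρ.real {b}) (k : ℕ) :
    MeasurePreserving (T.state k) (iid unitMeasure)
      ((iid (trunc ρ (T.level k))).prod (iid unitMeasure)) := by
  induction k with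
  | zero =>
    have trunc_zero : trunc ρ (T.level 0) = Measure.dirac 0 := by
      simp [trunc, T.level_zero]
    have iid_dirac : iid (trunc ρ (T.level 0)) = Measure.dirac fun _ => 0 := by
      simp only [iid, trunc_zero]
      exact Measure.infinitePi_dirac fun _ => 0
    refine ⟨T.measurable_state 0, ?_⟩
    rw [iid_dirac, Measure.dirac_prod]
    rfl
  | succ k ih =>
    exact ((T.stage k).refines.measurePreserving_step (trunc_singleton_zero_ne_zero hρ _) _).comp ih

lemma measurePreserving_letters (hρ : ∀ b, 0 < ρ.real {b}) (k : ℕ) :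
    MeasurePreserving (T.letters k) (iid unitMeasure) (iid (trunc ρ (T.level k))) :=
  measurePreserving_fst.comp (T.measurePreserving_state hρ k)

lemma measurePreserving_coords (hρ : ∀ b, 0 < ρ.real {b}) (k : ℕ) :
    MeasurePreserving (T.coords k) (iid unitMeasure) (iid unitMeasure) :=
  measurePreserving_snd.comp (T.measurePreserving_state hρ k)

lemma measure_lt_width_le (hρ : ∀ b, 0 < ρ.real {b}) {k : ℕ} {t : ℤ} (hk : t.natAbs + 1 ≤ k) :
    iid unitMeasure {z | 3 / 4 < T.width k z t} ≤ 2 * 2⁻¹ ^ k := by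
  have measurableSet_long : MeasurableSet {x : (ℤ → ℕ) × (ℤ → ℝ) |
      3 / 4 < (T.cells k).sideAt (T.cutLen k) x.1
        ((T.cells k).relabel (T.cutLen k) x.1 x.2) t} :=
    measurableSet_lt measurable_const ((measurable_pi_apply t).comp
      (((T.cells k).measurable_sideAt _).comp
        (measurable_fst.prodMk ((T.cells k).measurable_relabel _))))
  have one_le_level : 1 ≤ T.level k := (by omega : 1 ≤ k).trans T.strictMono.le_apply
  calc iid unitMeasure {z | 3 / 4 < T.width k z t}
      = ((iid (trunc ρ (T.level k))).prod (iid unitMeasure)) _ :=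
        (T.measurePreserving_state hρ k).measure_preimage measurableSet_long.nullMeasurableSet
    _ ≤ 2 * _ := (T.stage k).refines.measure_sideAt_le (trunc_singleton_zero_ne_zero hρ _) _ t
    _ ≤ 2 * 2⁻¹ ^ k := by
        gcongr
        exact (T.stage k).measure_isHeavy_le one_le_level t (Finset.mem_Icc.2 (by omega))

lemma ae_narrow (hρ : ∀ b, 0 < ρ.real {b}) (t : ℤ) :
    ∀ᵐ z ∂iid unitMeasure, ∃ᶠ k in atTop, T.width k z t ≤ 3 / 4 := by
  have tendsto_bound : Tendsto (fun k : ℕ => (2 : ℝ≥0∞) * 2⁻¹ ^ k) atTop (nhds 0) := by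
    simpa using ENNReal.Tendsto.const_mul (a := 2) (tendsto_pow_atTop_nhds_zero_of_lt_one
      (show (2⁻¹ : ℝ≥0∞) < 1 by simp)) (Or.inr (by simp))
  refine ae_frequently_of_tendsto_measure_not (tendsto_of_tendsto_of_tendsto_of_le_of_le'
    tendsto_const_nhds tendsto_bound (Eventually.of_forall fun _ => zero_le) ?_)
  filter_upwards [eventually_ge_atTop (t.natAbs + 1)] with k hk
  simpa only [not_le] using T.measure_lt_width_le hρ hk

lemma ae_stable (hρ : ∀ b, 0 < ρ.real {b}) (t : ℤ) :
    ∀ᵐ z ∂iid unitMeasure, ∃ᶠ k in atTop, T.letters k z t < T.level k := by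
  refine ae_frequently_of_tendsto_measure_not
    ((tendsto_measure_Ici (ρ := ρ) T.strictMono).congr fun k => ?_)
  have letter_law := (measurePreserving_eval_infinitePi (fun _ => trunc ρ (T.level k)) t).comp
    (T.measurePreserving_letters hρ k)
  have preimage_min : (fun b => min b (T.level k)) ⁻¹' Set.Ici (T.level k) = Set.Ici (T.level k) :=
    Set.ext fun b => by simp
  simp only [not_lt]
  calc ρ (Set.Ici (T.level k)) = trunc ρ (T.level k) (Set.Ici (T.level k)) := by
        rw [trunc_apply, preimage_min]
    _ = iid unitMeasure {z | T.level k ≤ T.letters k z t} :=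
        (letter_law.measure_preimage measurableSet_Ici.nullMeasurableSet).symm

lemma ae_good (hρ : ∀ b, 0 < ρ.real {b}) : ∀ᵐ z ∂iid unitMeasure, T.Good z := by
  have unitMeasure_Ioo : ∀ᵐ x ∂unitMeasure, x ∈ Set.Ioo (0 : ℝ) 1 := by
    rw [unitMeasure, restrict_Ico_eq_restrict_Ioc, ← restrict_Ioo_eq_restrict_Ioc]
    exact ae_restrict_mem measurableSet_Ioo
  have ae_cuts : ∀ᵐ z ∂iid unitMeasure, ∀ k, CutsUnbounded (T.cutLen k) (T.letters k z) :=
    ae_all_iff.2 fun k => (T.measurePreserving_letters hρ k).quasiMeasurePreserving.ae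
      (ae_cutsUnbounded (trunc_singleton_zero_ne_zero hρ _) _)
  have ae_mem_Ioo : ∀ᵐ z ∂iid unitMeasure, ∀ k t, T.coords k z t ∈ Set.Ioo (0 : ℝ) 1 :=
    ae_all_iff.2 fun k => (T.measurePreserving_coords hρ k).quasiMeasurePreserving.ae
      (ae_iid_of_ae unitMeasure_Ioo)
  filter_upwards [ae_cuts, ae_mem_Ioo, ae_all_iff.2 (T.ae_narrow hρ),
    ae_all_iff.2 (T.ae_stable hρ)] with z cuts mem_Ioo narrow stable
  exact ⟨cuts, mem_Ioo, fun t => frequently_atTop.1 (narrow t), fun t => (stable t).exists⟩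

lemma measure_code_cylinder (hρ : ∀ b, 0 < ρ.real {b}) (F : Finset ℤ) (η : ℤ → ℕ) :
    iid unitMeasure {z | ∀ t ∈ F, T.code z t = η t} = ∏ t ∈ F, ρ {η t} := by
  obtain ⟨k, lt_level⟩ : ∃ k, ∀ t ∈ F, η t < T.level k :=
    ⟨F.sup η + 1, fun t ht => (Nat.lt_succ_of_le (Finset.le_sup ht)).trans_le T.strictMono.le_apply⟩
  calc iid unitMeasure {z | ∀ t ∈ F, T.code z t = η t}
      = iid unitMeasure {z | ∀ t ∈ F, T.letters k z t = η t} := by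
        refine measure_congr (eventuallyEq_set.2 ?_)
        filter_upwards [T.ae_good hρ] with z hz
        refine forall₂_congr fun t ht => ?_
        have := hz.letters_eq_min k t
        have := lt_level t ht
        omega
    _ = iid (trunc ρ (T.level k)) {x | ∀ t ∈ F, x t = η t} :=
        (T.measurePreserving_letters hρ k).measure_preimage
          (measurableSet_letterCylinder F η).nullMeasurableSet
    _ = ∏ t ∈ F, ρ {η t} := by
        rw [iid_letterCylinder]
        exact Finset.prod_congr rfl fun t ht => trunc_singleton_of_lt (lt_level t ht)

lemma measurePreserving_code (hρ : ∀ b, 0 < ρ.real {b}) :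
    MeasurePreserving T.code (iid unitMeasure) (iid ρ) := by
  have := Measure.isProbabilityMeasure_map (μ := iid unitMeasure) T.measurable_code.aemeasurable
  refine ⟨T.measurable_code, ext_of_letterCylinders fun F η => ?_⟩
  rw [Measure.map_apply T.measurable_code (measurableSet_letterCylinder F η), iid_letterCylinder]
  exact T.measure_code_cylinder hρ F η

end Tower

/-! ### Codings by a common sequence -/

lemma shift_bijective {A : Type*} : Function.Bijective (shift : (ℤ → A) → ℤ → A) :=
  ((Equiv.addRight (1 : ℤ)).symm.arrowCongr (Equiv.refl A)).bijective

lemma isFinitary_of_continuousOn {A B : Type*} [TopologicalSpace A] [MeasurableSpace A]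
    [TopologicalSpace B] [DiscreteTopology B] [MeasurableSpace B] {D : Set (ℤ → A)}
    {φ : (ℤ → A) → ℤ → B} (hφ : ContinuousOn φ D) (μ : Measure (ℤ → A)) : IsFinitary μ D φ := by
  refine Eventually.of_forall fun x hx => ?_
  have coord_zero : ∀ᶠ y in nhdsWithin x D, φ y 0 = φ x 0 :=
    ((continuous_apply 0).continuousAt.comp_continuousWithinAt (hφ x hx)).eventually
      ((isOpen_discrete {φ x 0}).mem_nhds rfl)
  obtain ⟨U, hU, hxU, hφU⟩ := mem_nhdsWithin.1 coord_zero
  obtain ⟨I, u, hu, hIU⟩ := isOpen_pi_iff.1 hU x hxU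
  refine ⟨I.sup Int.natAbs, I.sup Int.natAbs, fun y hy hyx => hφU ⟨hIU fun i hi => ?_, hy⟩⟩
  have natAbs_le : i.natAbs ≤ I.sup Int.natAbs := Finset.le_sup (f := Int.natAbs) hi
  rw [hyx i (by omega) (by omega)]
  exact (hu i hi).2

/-- The map `g` codes the shift system with law `μ` by the one with law `κ`: on the invariant set
`E` of full measure it is an equivariant homeomorphism onto its image, and it sends `κ` to `μ`. -/
structure IsCoding {X A : Type*} [TopologicalSpace X] [MeasurableSpace X] [TopologicalSpace A]
    [MeasurableSpace A] (κ : Measure (ℤ → X)) (μ : Measure (ℤ → A)) (E : Set (ℤ → X))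
    (g : (ℤ → X) → ℤ → A) : Prop where
  measurableSet : MeasurableSet E
  shift_mem : ∀ {z}, shift z ∈ E ↔ z ∈ E
  ae_mem : ∀ᵐ z ∂κ, z ∈ E
  map_shift : ∀ z, g (shift z) = shift (g z)
  isEmbedding : Topology.IsEmbedding (E.domRestrict g)
  measurePreserving : MeasurePreserving g κ μ

/-- The map which decodes a sequence along `g` and encodes the result along `g'`; the constant
sequence outside `g '' E` is a junk value. -/
def recode {X A B : Type*} [Inhabited B] (E : Set (ℤ → X)) (g : (ℤ → X) → ℤ → A)
    (g' : (ℤ → X) → ℤ → B) : (ℤ → A) → ℤ → B :=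
  Function.extend (E.domRestrict g) (E.domRestrict g') default

namespace IsCoding

variable {X A B : Type*} [TopologicalSpace X] [MeasurableSpace X] [TopologicalSpace A]
  [MeasurableSpace A] {κ : Measure (ℤ → X)} {μ : Measure (ℤ → A)} {E E' : Set (ℤ → X)}
  {g : (ℤ → X) → ℤ → A} {g' : (ℤ → X) → ℤ → B}

lemma recode_apply [Inhabited B] (h : IsCoding κ μ E g) {z : ℤ → X} (hz : z ∈ E) :
    recode E g g' (g z) = g' z :=
  h.isEmbedding.injective.extend_apply _ _ (⟨z, hz⟩ : E)

variable [TopologicalSpace B] [MeasurableSpace B] {ν : Measure (ℤ → B)}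

lemma inter (h : IsCoding κ μ E g) (h' : IsCoding κ ν E' g') : IsCoding κ μ (E ∩ E') g where
  measurableSet := h.measurableSet.inter h'.measurableSet
  shift_mem := and_congr h.shift_mem h'.shift_mem
  ae_mem := h.ae_mem.and h'.ae_mem
  map_shift := h.map_shift
  isEmbedding := h.isEmbedding.comp (.inclusion Set.inter_subset_left)
  measurePreserving := h.measurePreserving

lemma continuousOn_recode [Inhabited B] (h : IsCoding κ μ E g) (h' : IsCoding κ ν E g') :
    ContinuousOn (recode E g g') (g '' E) := by
  rintro _ ⟨z, hz, rfl⟩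
  have recode_comp : recode E g g' ∘ E.domRestrict g = E.domRestrict g' :=
    Function.extend_comp h.isEmbedding.injective _ _
  have map_nhds : map (E.domRestrict g) (nhds ⟨z, hz⟩) = nhdsWithin (g z) (g '' E) := by
    rw [h.isEmbedding.map_nhds_eq, Set.range_domRestrict, Set.domRestrict_apply]
  rw [ContinuousWithinAt, h.recode_apply hz, ← map_nhds, tendsto_map'_iff, recode_comp]
  exact h'.isEmbedding.continuous.tendsto _

variable [StandardBorelSpace X] [Countable A] [MeasurableSingletonClass A]

lemma measurableEmbedding (h : IsCoding κ μ E g) : MeasurableEmbedding (E.domRestrict g) :=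
  have := h.measurableSet.standardBorel
  (h.measurePreserving.measurable.comp measurable_subtype_coe).measurableEmbedding
    h.isEmbedding.injective

lemma measurableSet_image (h : IsCoding κ μ E g) : MeasurableSet (g '' E) := by
  simpa only [Set.range_domRestrict] using h.measurableEmbedding.measurableSet_range

variable [IsProbabilityMeasure κ]

lemma isFactorMap_recode [Inhabited B] (h : IsCoding κ μ E g) (h' : IsCoding κ ν E g') :
    IsFactorMap μ ν (g '' E) (recode E g g') := by
  have measurable_recode : Measurable (recode E g g') :=
    h.measurableEmbedding.measurable_extend
      (h'.measurePreserving.measurable.comp measurable_subtype_coe) measurable_const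
  exact {
    measurable_map := measurable_recode
    dom_measurable := h.measurableSet_image
    dom_shift_invariant := by
      ext x
      constructor
      · rintro ⟨z, hz, hzx⟩
        obtain ⟨w, rfl⟩ := shift_bijective.surjective z
        exact ⟨w, h.shift_mem.1 hz, shift_bijective.injective (by rw [← h.map_shift, hzx])⟩
      · rintro ⟨z, hz, rfl⟩
        exact ⟨shift z, h.shift_mem.2 hz, h.map_shift z⟩
    dom_full := by
      rw [← h.measurePreserving.measure_preimage h.measurableSet_image.nullMeasurableSet,
        ← mem_ae_iff_prob_eq_one (h.measurePreserving.measurable h.measurableSet_image)]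
      filter_upwards [h.ae_mem] with z hz using Set.mem_image_of_mem g hz
    pushforward := by
      rw [← h.measurePreserving.map_eq, ← h'.measurePreserving.map_eq,
        Measure.map_map measurable_recode h.measurePreserving.measurable]
      refine Measure.map_congr ?_
      filter_upwards [h.ae_mem] with z hz using (h.recode_apply hz).symm
    equivariant := by
      rintro _ ⟨z, hz, rfl⟩
      rw [← h.map_shift, h.recode_apply hz, h.recode_apply (h.shift_mem.2 hz), h'.map_shift] }

variable [Countable B] [MeasurableSingletonClass B] [DiscreteTopology A] [DiscreteTopology B]
  [Inhabited A] [Inhabited B]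

lemma isFinitaryIsomorphism_recode (h : IsCoding κ μ E g) (h' : IsCoding κ ν E g') :
    IsFinitaryIsomorphism μ ν (g '' E) (g' '' E) (recode E g g') (recode E g' g) := by
  refine ⟨h.isFactorMap_recode h', h'.isFactorMap_recode h,
    isFinitary_of_continuousOn (h.continuousOn_recode h') μ,
    isFinitary_of_continuousOn (h'.continuousOn_recode h) ν, ?_, ?_⟩
  · rintro _ ⟨z, hz, rfl⟩
    rw [h.recode_apply hz, h'.recode_apply hz]
    exact ⟨Set.mem_image_of_mem g' hz, rfl⟩
  · rintro _ ⟨z, hz, rfl⟩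
    rw [h'.recode_apply hz, h.recode_apply hz]
    exact ⟨Set.mem_image_of_mem g hz, rfl⟩

end IsCoding

lemma Tower.isEmbedding_code {ρ : Measure ℕ} (T : Tower ρ) :
    Topology.IsEmbedding ({z | T.Good z}.domRestrict T.code) := by
  have isInducing : Topology.IsInducing ({z | T.Good z}.domRestrict T.code) := by
    refine Topology.isInducing_iff_nhds.2 fun z => le_antisymm ?_ ?_
    · exact (continuousOn_iff_continuous_domRestrict.1 continuousOn_code).continuousAt.le_comap
    · rw [nhds_subtype_eq_comap, ← map_le_iff_le_comap]
      exact z.2.le_nhds_of_tendsto_code (eventually_map.2 (Eventually.of_forall fun x => x.2))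
        tendsto_comap
  exact ⟨isInducing, isInducing.injective⟩

lemma Tower.isCoding {ρ : Measure ℕ} [IsProbabilityMeasure ρ] (T : Tower ρ)
    (hρ : ∀ b, 0 < ρ.real {b}) : IsCoding (iid unitMeasure) (iid ρ) {z | T.Good z} T.code where
  measurableSet := T.measurableSet_good
  shift_mem := T.good_shift
  ae_mem := T.ae_good hρ
  map_shift := T.code_shift
  isEmbedding := T.isEmbedding_code
  measurePreserving := T.measurePreserving_code hρ

lemma IsBernoulliMeasure.exists_eq_iid {A : Type*} [MeasurableSpace A]
    [MeasurableSingletonClass A] [Countable A] [Nonempty A] {μ : Measure (ℤ → A)} {p : A → ℝ}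
    (hμ : IsBernoulliMeasure μ p) (hp : ∀ a, 0 ≤ p a) :
    ∃ ρ : Measure A, IsProbabilityMeasure ρ ∧ (∀ a, ρ.real {a} = p a) ∧ μ = iid ρ := by
  have : IsProbabilityMeasure μ := ⟨by simpa using hμ ∅ (Classical.arbitrary _)⟩
  have measurable_eval : Measurable fun x : ℤ → A => x 0 := measurable_pi_apply 0
  have marginal (a) : (μ.map fun x => x 0) {a} = ENNReal.ofReal (p a) := by
    rw [Measure.map_apply measurable_eval (measurableSet_singleton a)]
    simpa [Set.preimage] using hμ {0} fun _ => a
  have isProbabilityMeasure_marginal :=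
    Measure.isProbabilityMeasure_map (μ := μ) measurable_eval.aemeasurable
  refine ⟨μ.map fun x => x 0, isProbabilityMeasure_marginal, fun a => ?_,
    ext_of_letterCylinders fun F η => ?_⟩
  · rw [measureReal_def, marginal, ENNReal.toReal_ofReal (hp a)]
  · rw [hμ, iid_letterCylinder, ENNReal.ofReal_prod_of_nonneg fun i _ => hp _]
    simp only [marginal]

lemma IsBernoulliMeasure.exists_isCoding {μ : Measure (ℤ → ℕ)} {p : ℕ → ℝ}
    (hμ : IsBernoulliMeasure μ p) (hp : ∀ i, 0 < p i)
    (hent : ∑' i, ENNReal.ofReal (-(p i * Real.log (p i))) = ⊤) :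
    ∃ E g, IsCoding (iid unitMeasure) μ E g := by
  obtain ⟨ρ, _, hρ, rfl⟩ := hμ.exists_eq_iid fun i => (hp i).le
  obtain ⟨T⟩ : Nonempty (Tower ρ) := nonempty_tower (fun b => by rw [hρ]; exact hp b)
    (by simpa only [hρ, Real.negMulLog, neg_mul] using hent)
  exact ⟨_, _, T.isCoding fun b => by rw [hρ]; exact hp b⟩

/-- **Petit.** Two Bernoulli schemes on a countable alphabet, with strictly positive
probability vectors of infinite entropy, are finitarily isomorphic. -/
theorem countable_bernoulli_infinite_entropy_finitarily_isomorphic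
    (p q : ℕ → ℝ)
    (hp_pos : ∀ i, 0 < p i) (hq_pos : ∀ i, 0 < q i)
    (hp_sum : ∑' i, p i = 1) (hq_sum : ∑' i, q i = 1)
    (hp_ent : ∑' i, ENNReal.ofReal (-(p i * Real.log (p i))) = ⊤)
    (hq_ent : ∑' i, ENNReal.ofReal (-(q i * Real.log (q i))) = ⊤)
    (μ ν : Measure (ℤ → ℕ))
    (hμ : IsBernoulliMeasure μ p) (hν : IsBernoulliMeasure ν q) :
    ∃ (D E : Set (ℤ → ℕ)) (φ ψ : (ℤ → ℕ) → (ℤ → ℕ)),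
      IsFinitaryIsomorphism μ ν D E φ ψ := by
  obtain ⟨A, g, coding_g⟩ := hμ.exists_isCoding hp_pos hp_ent
  obtain ⟨B, g', coding_g'⟩ := hν.exists_isCoding hq_pos hq_ent
  have restricted_g : IsCoding (iid unitMeasure) μ (A ∩ B) g := coding_g.inter coding_g'
  have restricted_g' : IsCoding (iid unitMeasure) ν (A ∩ B) g' :=
    Set.inter_comm B A ▸ coding_g'.inter coding_g
  exact ⟨_, _, _, _, restricted_g.isFinitaryIsomorphism_recode restricted_g'⟩
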